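/- arXiv:2206.11716 — 2 statements merged into one kernel-verified Lean document; each statement's English description precedes it below -/
import Mathlib

section
/- Let D be a minimal normal subgroup of a finite group G which is a direct product of s ≥ 2 isomorphic non-abelian simple groups (so D is non-simple and non-solvable). Then every irreducible character χ of G whose kernel does not contain D satisfies χ(1) ≥ 6. -/
open scoped BigOperators Classical
open CategoryTheory

/-- `χ : G → ℂ` is the character of an irreducible complex representation of `G`. -/
def IsIrrChar (G : Type) [Group G] (χ : G → ℂ) : Prop :=
  ∃ V : FDRep ℂ G, Simple V ∧ ∀ g, V.character g = χ g

/-- A character is rational-valued if all its values lie in `ℚ`. -/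
def RatValued {G : Type} (χ : G → ℂ) : Prop := ∀ g, ∃ q : ℚ, χ g = (q : ℂ)

/-- A character is real-valued if all its values lie in `ℝ`. -/
def RealValued {G : Type} (χ : G → ℂ) : Prop := ∀ g, (χ g).im = 0

/-- A character has even degree. -/
def EvenDeg {G : Type} [One G] (χ : G → ℂ) : Prop := ∃ k : ℕ, χ 1 = ((2 * k : ℕ) : ℂ)

/-- The kernel of the character `χ` contains the subgroup `N`. -/
def KerContains {G : Type} [Group G] (χ : G → ℂ) (N : Subgroup G) : Prop :=
  ∀ n ∈ N, χ n = χ 1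

/-- The induced class function `f ^ G` of `f : N → ℂ`. -/
noncomputable def Ind {G : Type} [Group G] [Fintype G] (N : Subgroup G) (f : ↥N → ℂ) : G → ℂ :=
  fun g => (Nat.card N : ℂ)⁻¹ *
    ∑ x : G, if h : x⁻¹ * g * x ∈ N then f ⟨x⁻¹ * g * x, h⟩ else 0

/-- The standard inner product of class functions on a finite group. -/
noncomputable def cInner {G : Type} [Fintype G] (f g : G → ℂ) : ℂ :=
  (Fintype.card G : ℂ)⁻¹ * ∑ x : G, f x * (starRingEnd ℂ) (g x)

/-- `χ` is an irreducible constituent of the class function `f`. -/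
def IsConstituent {G : Type} [Group G] [Fintype G] (f χ : G → ℂ) : Prop :=
  IsIrrChar G χ ∧ cInner f χ ≠ 0

lemma lam_congr {G : Type} [Group G] {N : Subgroup G} (lam : ↥N → ℂ)
    {x y : G} (px : x ∈ N) (py : y ∈ N) (h : x = y) : lam ⟨x, px⟩ = lam ⟨y, py⟩ := by
  subst h; rfl

/-- The inertia group `I_G(λ)` of a character `λ` of a normal subgroup `N` of `G`. -/
def inertia {G : Type} [Group G] (N : Subgroup G) [hN : N.Normal] (lam : ↥N → ℂ) :
    Subgroup G where
  carrier := {g | ∀ n : ↥N, lam ⟨g * n * g⁻¹, hN.conj_mem n n.2 g⟩ = lam n}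
  one_mem' := by
    intro n
    exact lam_congr lam _ n.2 (by group)
  mul_mem' := by
    intro a b ha hb n
    have h1 := ha ⟨(b : G) * n * b⁻¹, hN.conj_mem _ n.2 b⟩
    calc lam ⟨(a * b) * n * (a * b)⁻¹, _⟩
        = lam ⟨a * ((b : G) * n * b⁻¹) * a⁻¹, hN.conj_mem _ (hN.conj_mem _ n.2 b) a⟩ :=
          lam_congr lam _ _ (by group)
      _ = lam ⟨(b : G) * n * b⁻¹, hN.conj_mem _ n.2 b⟩ := h1
      _ = lam n := hb n
  inv_mem' := by
    intro a ha n
    have h1 := ha ⟨a⁻¹ * (n : G) * a⁻¹⁻¹, hN.conj_mem _ n.2 a⁻¹⟩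
    have h2 : lam ⟨a * (a⁻¹ * (n : G) * a⁻¹⁻¹) * a⁻¹,
        hN.conj_mem _ (hN.conj_mem _ n.2 a⁻¹) a⟩ = lam n :=
      lam_congr lam _ n.2 (by group)
    exact h1.symm.trans h2

/-!
By minimality a representation of `G` that is nontrivial on `D` is faithful on `D`, so two distinct
simple factors `S` and `T` of `D` act nontrivially on `V` and commute with each other.

A nontrivial representation of `S` has degree at least `3`. In degree `2` the determinant is `1`, so
an involution of `S` would act as a scalar and be central; hence `|S|` is odd and squaring permutes
`S`. Averaging `χ(g²) = χ(g)² - 2` over `S` then gives `dim End_S(V) = dim V^S + 2`, so some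
nonscalar endomorphism commutes with `S`; its centralizer is commutative, and so is the image of
`S`.

Now write `V = V^S ⊕ W`, which is also `T`-stable. If `T` acts trivially on `W`, then it acts
nontrivially on `V^S`, and both summands have dimension at least `3`. Otherwise `dim W < 6` would
make `W` irreducible under `S`, and by Schur's lemma `T` would act on `W` through scalars.
-/

section SimpleGroup

variable {S M : Type*} [Group S] [IsSimpleGroup S]

lemma injective_of_isSimpleGroup [MulOneClass M] {f : S →* M} (hf : f ≠ 1) :
    Function.Injective f :=
  f.ker_eq_bot_iff.1 <|
    f.normal_ker.eq_bot_or_eq_top.resolve_right (mt MonoidHom.ker_eq_top_iff.1 hf)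

lemma eq_one_of_forall_commute [MulOneClass M] (hS : ¬ ∀ a b : S, a * b = b * a) {f : S →* M}
    (hf : ∀ a b, Commute (f a) (f b)) : f = 1 := by
  by_contra hne
  exact hS fun a b => (hf a b).of_map (injective_of_isSimpleGroup hne)

lemma center_eq_bot_of_isSimpleGroup (hS : ¬ ∀ a b : S, a * b = b * a) :
    Subgroup.center S = ⊥ :=
  (inferInstance : (Subgroup.center S).Normal).eq_bot_or_eq_top.resolve_right fun htop =>
    hS fun a b => Subgroup.mem_center_iff.1 (htop ▸ Subgroup.mem_top b) a

end SimpleGroup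

section Endomorphism

open Module

lemma ker_le_comap_of_commute {R M : Type*} [Semiring R] [AddCommMonoid M] [Module R M]
    {A B : End R M} (h : Commute A B) :
    LinearMap.ker A ≤ (LinearMap.ker A).comap B := fun v hv => by
  have hAB : A (B v) = B (A v) := LinearMap.congr_fun h v
  rw [LinearMap.mem_ker] at hv
  rw [Submodule.mem_comap, LinearMap.mem_ker, hAB, hv, map_zero]

variable {k V : Type*} [Field k] [AddCommGroup V] [Module k V]

lemma commute_of_finrank_le_one [FiniteDimensional k V] (h : finrank k V ≤ 1) (A B : End k V) :
    Commute A B := by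
  have hscalar (v : V) : ¬ LinearIndependent k ![v, A v] := fun hli => by
    simpa using hli.fintype_card_le_finrank.trans h
  obtain ⟨a, rfl⟩ := LinearMap.exists_eq_smul_id_of_forall_notLinearIndependent hscalar
  exact (Commute.one_left B).smul_left a

variable (h2 : finrank k V = 2)
include h2

lemma sq_eq_trace_smul_sub_det_smul_one (A : End k V) :
    A ^ 2 = LinearMap.trace k V A • A - LinearMap.det A • 1 := by
  have := finite_of_finrank_eq_succ h2
  let b := finBasisOfFinrankEq k V h2
  have hchar := A.aeval_self_charpoly
  rw [← LinearMap.charpoly_toMatrix A b, Matrix.charpoly_fin_two, LinearMap.det_toMatrix,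
    ← LinearMap.trace_eq_matrix_trace k b] at hchar
  simp only [map_add, map_sub, map_mul, map_pow, Polynomial.aeval_X, Polynomial.aeval_C,
    Algebra.algebraMap_eq_smul_one, smul_one_mul] at hchar
  rw [← sub_eq_zero, ← hchar]
  abel

lemma exists_eq_smul_one_of_sq_eq_one [NeZero (2 : k)] {A : End k V} (hsq : A ^ 2 = 1)
    (hdet : LinearMap.det A = 1) : ∃ c : k, A = c • 1 := by
  have : Nontrivial V := nontrivial_of_finrank_pos (R := k) (by omega)
  have htr : LinearMap.trace k V A • A = (2 : k) • 1 := by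
    have hCH := sq_eq_trace_smul_sub_det_smul_one h2 A
    rw [hsq, hdet, one_smul] at hCH
    exact (eq_sub_iff_add_eq.1 hCH).symm.trans (two_smul k 1).symm
  have htr_ne : LinearMap.trace k V A ≠ 0 := fun h0 => by
    rw [h0, zero_smul, eq_comm] at htr
    exact smul_ne_zero two_ne_zero one_ne_zero htr
  exact ⟨(LinearMap.trace k V A)⁻¹ * 2, by rw [mul_smul, ← htr, inv_smul_smul₀ htr_ne]⟩

lemma exists_eq_smul_one_add_smul_of_commute {A B : End k V} (hB : ∀ c : k, B ≠ c • 1)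
    (hAB : Commute A B) : ∃ a b : k, A = a • 1 + b • B := by
  have := finite_of_finrank_eq_succ h2
  obtain ⟨v, hv⟩ : ∃ v, LinearIndependent k ![v, B v] := by
    by_contra! hdep
    obtain ⟨c, hc⟩ := LinearMap.exists_eq_smul_id_of_forall_notLinearIndependent hdep
    exact hB c hc
  let e : Basis (Fin 2) k V := basisOfLinearIndependentOfCardEqFinrank hv (by simp [h2])
  have he : e 0 = v ∧ e 1 = B v := by simp [e]
  obtain ⟨a, b, hab⟩ : ∃ a b : k, A v = a • v + b • B v :=
    ⟨e.repr (A v) 0, e.repr (A v) 1, by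
      conv_lhs => rw [← e.sum_repr (A v), Fin.sum_univ_two, he.1, he.2]⟩
  refine ⟨a, b, e.ext fun i => ?_⟩
  have hABv : A (B v) = B (A v) := LinearMap.congr_fun hAB v
  fin_cases i
  · simp [he.1, hab]
  · simp [he.2, hABv, hab]

lemma commute_of_commute_of_forall_ne_smul_one {A B C : End k V} (hB : ∀ c : k, B ≠ c • 1)
    (hA : Commute A B) (hC : Commute C B) : Commute A C := by
  obtain ⟨a, b, rfl⟩ := exists_eq_smul_one_add_smul_of_commute h2 hB hA
  exact ((Commute.one_left C).smul_left a).add_left (hC.symm.smul_left b)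

end Endomorphism

section TwoDimensional

open Module

variable {k S V : Type*} [Field k] [Group S] [AddCommGroup V] [Module k V]
  {ρ : Representation k S V}

section Determinant

variable (h2 : finrank k V = 2) (hdet : ∀ g, LinearMap.det (ρ g) = 1)
include h2 hdet

lemma apply_sq_eq_character_smul_sub_one (g : S) : ρ g ^ 2 = ρ.character g • ρ g - 1 := by
  rw [sq_eq_trace_smul_sub_det_smul_one h2, hdet, one_smul, Representation.character]

lemma character_sq_eq (g : S) : ρ.character (g ^ 2) = ρ.character g ^ 2 - 2 := by
  have := finite_of_finrank_eq_succ h2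
  rw [Representation.character, map_pow, apply_sq_eq_character_smul_sub_one h2 hdet, map_sub,
    map_smul, LinearMap.trace_one, h2, smul_eq_mul, Nat.cast_ofNat, sq, Representation.character]

lemma character_inv_eq (g : S) : ρ.character g⁻¹ = ρ.character g := by
  have := finite_of_finrank_eq_succ h2
  have hsum : ρ g + ρ g⁻¹ = ρ.character g • 1 := by
    have hsq := congr($(apply_sq_eq_character_smul_sub_one h2 hdet g) * ρ g⁻¹)
    rw [sub_mul, smul_mul_assoc, one_mul, ← map_pow, ← map_mul, ← map_mul, mul_inv_cancel,
      map_one, pow_two, mul_inv_cancel_right] at hsq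
    exact eq_sub_iff_add_eq.1 hsq
  have htr := congr(LinearMap.trace k V $hsum)
  rw [map_add, map_smul, LinearMap.trace_one, h2, smul_eq_mul, Nat.cast_ofNat] at htr
  change ρ.character g + ρ.character g⁻¹ = _ at htr
  linear_combination htr

lemma finrank_intertwiningMap_self_of_odd_card [Finite S] [CharZero k] (hodd : Odd (Nat.card S)) :
    finrank k (Representation.IntertwiningMap ρ ρ) = finrank k ρ.invariants + 2 := by
  have := finite_of_finrank_eq_succ h2
  have := Fintype.ofFinite S
  have hcard : (Nat.card S : k) ≠ 0 := Nat.cast_ne_zero.2 Nat.card_pos.ne'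
  let _ : Invertible (Nat.card S : k) := invertibleOfNonzero hcard
  have hsq : ∑ g : S, ρ.character (g ^ 2) = ∑ g : S, ρ.character g :=
    Equiv.sum_comp (powCoprime hodd.coprime_two_right) ρ.character
  have hchar (g : S) : ρ.character g * ρ.character g⁻¹ = ρ.character (g ^ 2) + 2 := by
    rw [character_inv_eq h2 hdet, character_sq_eq h2 hdet]
    ring
  rw [← Nat.cast_inj (R := k), Nat.cast_add, Nat.cast_ofNat,
    ← ρ.card_inv_mul_sum_char_mul_char_eq_finrank, ← ρ.card_inv_mul_sum_char_eq_finrank]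
  simp only [hchar, Finset.sum_add_distrib, hsq, Finset.sum_const, Finset.card_univ,
    nsmul_eq_mul, Fintype.card_eq_nat_card]
  field_simp

lemma commute_of_odd_card [Finite S] [CharZero k] (hodd : Odd (Nat.card S)) (a b : S) :
    Commute (ρ a) (ρ b) := by
  obtain ⟨B, hB⟩ :
      ∃ B : Representation.IntertwiningMap ρ ρ, ∀ c : k, B.toLinearMap ≠ c • 1 := by
    by_contra! hscalar
    have hle : finrank k (Representation.IntertwiningMap ρ ρ) ≤ 1 :=
      finrank_le_one 1 fun B => (hscalar B).imp fun c hc =>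
        Representation.IntertwiningMap.ext hc.symm
    rw [finrank_intertwiningMap_self_of_odd_card h2 hdet hodd] at hle
    omega
  exact commute_of_commute_of_forall_ne_smul_one h2 hB (B.isIntertwining' a).symm
    (B.isIntertwining' b).symm

end Determinant

lemma odd_card_of_injective_of_center_eq_bot [Finite S] [NeZero (2 : k)]
    (hS : Subgroup.center S = ⊥) (h2 : finrank k V = 2) (hdet : ∀ g, LinearMap.det (ρ g) = 1)
    (hρ : Function.Injective ρ) : Odd (Nat.card S) := by
  rw [← Nat.not_even_iff_odd, even_iff_two_dvd]
  intro hdvd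
  have : Fact (Nat.Prime 2) := ⟨Nat.prime_two⟩
  obtain ⟨t, ht⟩ := exists_prime_orderOf_dvd_card' 2 hdvd
  have ht_sq : t ^ 2 = 1 := ht ▸ pow_orderOf_eq_one t
  have ht_ne : t ≠ 1 := fun h => by simp [h] at ht
  obtain ⟨c, hc⟩ := exists_eq_smul_one_of_sq_eq_one h2
    (by rw [← map_pow, ht_sq, map_one] : ρ t ^ 2 = 1) (hdet t)
  have ht_center : t ∈ Subgroup.center S := Subgroup.mem_center_iff.2 fun g => hρ <| by
    rw [map_mul, map_mul, hc, smul_one_mul, mul_smul_one]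
  exact ht_ne (Subgroup.mem_bot.1 (hS ▸ ht_center))

theorem three_le_finrank_of_ne_one [Finite S] [IsSimpleGroup S] [FiniteDimensional k V]
    [CharZero k] (hS : ¬ ∀ a b : S, a * b = b * a) (hρ : ρ ≠ 1) : 3 ≤ finrank k V := by
  have hncomm : ¬ ∀ a b, Commute (ρ a) (ρ b) := mt (eq_one_of_forall_commute hS) hρ
  have hdet (g : S) : LinearMap.det (ρ g) = 1 :=
    DFunLike.congr_fun (eq_one_of_forall_commute hS (f := LinearMap.det.comp ρ)
      fun _ _ => Commute.all _ _) g
  by_contra! hlt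
  obtain h1 | h2 : finrank k V ≤ 1 ∨ finrank k V = 2 := by omega
  · exact hncomm fun a b => commute_of_finrank_le_one h1 _ _
  · exact hncomm <| commute_of_odd_card h2 hdet <| odd_card_of_injective_of_center_eq_bot
      (center_eq_bot_of_isSimpleGroup hS) h2 hdet (injective_of_isSimpleGroup hρ)

end TwoDimensional

section Invariants

open Module Representation

variable {k S V : Type*} [CommRing k] [Group S] [AddCommGroup V] [Module k V]
  {ρ : Representation k S V}

lemma commute_asAlgebraHom {B : End k V} (hB : ∀ g, Commute (ρ g) B) (x : MonoidAlgebra k S) :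
    Commute (ρ.asAlgebraHom x) B := by
  induction x using MonoidAlgebra.induction_on with
  | of g => simpa using hB g
  | add x y hx hy => simpa using hx.add_left hy
  | smul c x hx => simpa using hx.smul_left c

lemma le_comap_invariants_of_commute {B : End k V} (hB : ∀ g, Commute (ρ g) B) :
    ρ.invariants ≤ ρ.invariants.comap B := fun v hv g => by
  have hρB : ρ g (B v) = B (ρ g v) := LinearMap.congr_fun (hB g) v
  rw [hρB, hv g]

lemma eq_one_of_le_invariants {U W : Submodule k V} (hUW : Codisjoint U W)
    (hU : U ≤ ρ.invariants) (hW : W ≤ ρ.invariants) : ρ = 1 :=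
  MonoidHom.ext fun g => LinearMap.ext fun _ =>
    hUW.eq_top.ge.trans (sup_le hU hW) Submodule.mem_top g

lemma exists_isCompl_invariants [Finite S] (ρ : Representation k S V)
    (hcard : IsUnit (Nat.card S : k)) :
    ∃ W : Submodule k V, IsCompl ρ.invariants W ∧ (∀ g, W ≤ W.comap (ρ g)) ∧
      ∀ B : End k V, (∀ g, Commute (ρ g) B) → W ≤ W.comap B := by
  have := Fintype.ofFinite S
  rw [Nat.card_eq_fintype_card] at hcard
  let _ : Invertible (Fintype.card S : k) := hcard.invertible
  have hρ (g : S) : Commute ρ.averageMap (ρ g) := by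
    rw [averageMap, commute_iff_eq, ← asAlgebraHom_single_one, ← map_mul, ← map_mul,
      GroupAlgebra.mul_average_left, GroupAlgebra.mul_average_right]
  exact ⟨LinearMap.ker ρ.averageMap, ρ.isProj_averageMap.isCompl,
    fun g => ker_le_comap_of_commute (hρ g),
    fun B hB => ker_le_comap_of_commute (commute_asAlgebraHom hB _)⟩

variable {W : Submodule k V} (hW : ∀ g, W ≤ W.comap (ρ g))

lemma subrepresentation_eq_one_iff : ρ.subrepresentation W hW = 1 ↔ W ≤ ρ.invariants := by
  constructor
  · exact fun h v hv g => congr((($h g) ⟨v, hv⟩ : V))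
  · exact fun h => MonoidHom.ext fun g => LinearMap.ext fun w => Subtype.ext (h w.2 g)

lemma invariants_subrepresentation_eq_bot (h : Disjoint ρ.invariants W) :
    (ρ.subrepresentation W hW).invariants = ⊥ := by
  refine (Submodule.eq_bot_iff _).2 fun w hw => Subtype.ext ?_
  exact Submodule.disjoint_def.1 h w (fun g => congr_arg Subtype.val (hw g)) w.2

end Invariants

section Commuting

open Module Representation

variable {k S T V : Type*} [Field k] [Group S] [Group T] [AddCommGroup V] [Module k V]
  [FiniteDimensional k V] {ρ : Representation k S V} {σ : Representation k T V}

lemma exists_eq_smul_one_of_isIrreducible [IsAlgClosed k] [ρ.IsIrreducible] {B : End k V}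
    (hB : ∀ g, Commute (ρ g) B) : ∃ c : k, B = c • 1 := by
  let f : IntertwiningMap ρ ρ := ⟨B, fun g => (hB g).symm⟩
  obtain ⟨c, hc⟩ :=
    (IsIrreducible.algebraMap_intertwiningMap_bijective_of_isAlgClosed (ρ := ρ)).surjective f
  exact ⟨c, congr_arg IntertwiningMap.toLinearMap hc.symm⟩

variable [Finite S] [IsSimpleGroup S] [CharZero k]

lemma isIrreducible_of_finrank_lt_six [Nontrivial V] (hS : ¬ ∀ a b : S, a * b = b * a)
    (hρ : ρ.invariants = ⊥) (hV : finrank k V < 6) : ρ.IsIrreducible where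
  exists_pair_ne := ⟨⊥, ⊤, fun h => bot_ne_top (congr_arg Subrepresentation.toSubmodule h)⟩
  eq_bot_or_eq_top U := by
    have hdim (U : Subrepresentation ρ) (hU : U ≠ ⊥) : 3 ≤ finrank k U.toSubmodule := by
      have hUρ (g : S) : U.toSubmodule ≤ U.toSubmodule.comap (ρ g) := U.apply_mem_toSubmodule g
      refine three_le_finrank_of_ne_one (ρ := ρ.subrepresentation _ hUρ) hS fun h => hU ?_
      rw [subrepresentation_eq_one_iff, hρ, le_bot_iff] at h
      exact Subrepresentation.toSubmodule_injective h
    obtain ⟨U', hUU'⟩ := exists_isCompl U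
    have hcompl : IsCompl U.toSubmodule U'.toSubmodule :=
      ⟨disjoint_iff.2 (congr_arg Subrepresentation.toSubmodule hUU'.inf_eq_bot),
        codisjoint_iff.2 (congr_arg Subrepresentation.toSubmodule hUU'.sup_eq_top)⟩
    by_contra! hU
    have hU' : U' ≠ ⊥ := fun h => hU.2 (eq_top_of_isCompl_bot (h ▸ hUU'))
    have hsum := Submodule.finrank_add_eq_of_isCompl hcompl
    have hU_dim := hdim U hU.1
    have hU'_dim := hdim U' hU'
    omega

variable [IsSimpleGroup T] [IsAlgClosed k]

lemma six_le_finrank_of_invariants_eq_bot (hS : ¬ ∀ a b : S, a * b = b * a)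
    (hT : ¬ ∀ a b : T, a * b = b * a) (hρσ : ∀ x y, Commute (ρ x) (σ y))
    (hρ : ρ.invariants = ⊥) (hσ : σ ≠ 1) : 6 ≤ finrank k V := by
  by_contra! hlt
  refine hσ (eq_one_of_forall_commute hT fun x y => ?_)
  cases subsingleton_or_nontrivial V
  · exact Subsingleton.elim _ _
  have := isIrreducible_of_finrank_lt_six hS hρ hlt
  obtain ⟨c, hc⟩ := exists_eq_smul_one_of_isIrreducible fun g => hρσ g x
  exact hc ▸ (Commute.one_left _).smul_left c

theorem six_le_finrank_of_commute [Finite T] (hS : ¬ ∀ a b : S, a * b = b * a)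
    (hT : ¬ ∀ a b : T, a * b = b * a) (hρσ : ∀ x y, Commute (ρ x) (σ y))
    (hρ : ρ ≠ 1) (hσ : σ ≠ 1) : 6 ≤ finrank k V := by
  obtain ⟨W, hcompl, hWρ, hW⟩ :=
    exists_isCompl_invariants ρ (Nat.cast_ne_zero.2 Nat.card_pos.ne').isUnit
  have hWσ (y : T) : W ≤ W.comap (σ y) := hW (σ y) fun x => hρσ x y
  by_cases htriv : W ≤ σ.invariants
  · have hIσ (y : T) : ρ.invariants ≤ ρ.invariants.comap (σ y) :=
      le_comap_invariants_of_commute fun x => hρσ x y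
    have hρW : 3 ≤ finrank k W := by
      refine three_le_finrank_of_ne_one (ρ := ρ.subrepresentation W hWρ) hS fun h => hρ ?_
      exact eq_one_of_le_invariants hcompl.codisjoint le_rfl
        ((subrepresentation_eq_one_iff hWρ).1 h)
    have hσI : 3 ≤ finrank k ρ.invariants := by
      refine three_le_finrank_of_ne_one (ρ := σ.subrepresentation _ hIσ) hT fun h => hσ ?_
      exact eq_one_of_le_invariants hcompl.codisjoint ((subrepresentation_eq_one_iff hIσ).1 h)
        htriv
    have hsum := Submodule.finrank_add_eq_of_isCompl hcompl
    omega
  · refine le_trans ?_ (Submodule.finrank_le W)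
    refine six_le_finrank_of_invariants_eq_bot hS hT (ρ := ρ.subrepresentation W hWρ)
      (σ := σ.subrepresentation W hWσ) ?_ ?_ ?_
    · exact fun x y => LinearMap.ext fun w => Subtype.ext (LinearMap.congr_fun (hρσ x y) w)
    · exact invariants_subrepresentation_eq_bot hWρ hcompl.disjoint
    · rwa [Ne, subrepresentation_eq_one_iff]

theorem six_le_finrank_of_injective_pi {ι : Type*} [Nontrivial ι] {S : ι → Type*}
    [∀ i, Group (S i)] [∀ i, Finite (S i)] [∀ i, IsSimpleGroup (S i)]
    (hS : ∀ i, ¬ ∀ a b : S i, a * b = b * a) {ρ : Representation k (∀ i, S i) V}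
    (hρ : Function.Injective ρ) : 6 ≤ finrank k V := by
  obtain ⟨i, j, hij⟩ := exists_pair_ne ι
  have hne (i : ι) : ρ.comp (MonoidHom.mulSingle S i) ≠ 1 := by
    obtain ⟨x, hx⟩ := exists_ne (1 : S i)
    refine fun h => hx (Pi.mulSingle_injective i (hρ ?_))
    rw [Pi.mulSingle_one, map_one]
    exact DFunLike.congr_fun h x
  exact six_le_finrank_of_commute (hS i) (hS j)
    (fun x y => (Pi.mulSingle_commute hij x y).map ρ) (hne i) (hne j)

end Commuting

section MinimalNormal

variable {G : Type*} [Group G] {D : Subgroup G} [D.Normal]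
  (hmin : ∀ K : Subgroup G, K.Normal → K ≤ D → K = ⊥ ∨ K = D)
include hmin

lemma injective_comp_subtype_of_minimal {M : Type*} [MulOneClass M] {f : G →* M}
    (hf : ¬ D ≤ f.ker) : Function.Injective (f.comp D.subtype) := by
  have hbot : f.ker ⊓ D = ⊥ :=
    (hmin (f.ker ⊓ D) inferInstance inf_le_right).resolve_right fun h => hf (inf_eq_right.1 h)
  rw [← MonoidHom.ker_eq_bot_iff, ← MonoidHom.comap_ker]
  exact Subgroup.subgroupOf_eq_bot.2 (disjoint_iff.2 hbot)

theorem stmt3_general {ι : Type*} [Nontrivial ι] {S : ι → Type*}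
    [∀ i, Group (S i)] [∀ i, Finite (S i)] [∀ i, IsSimpleGroup (S i)]
    (hS : ∀ i, ¬ ∀ a b : S i, a * b = b * a) (e : D ≃* ∀ i, S i)
    {k V : Type*} [Field k] [IsAlgClosed k] [CharZero k] [AddCommGroup V] [Module k V]
    [FiniteDimensional k V] (ρ : Representation k G V) (hρ : ¬ D ≤ ρ.ker) :
    6 ≤ Module.finrank k V :=
  six_le_finrank_of_injective_pi (ρ := (ρ.comp D.subtype).comp e.symm.toMonoidHom) hS <|
    (injective_comp_subtype_of_minimal hmin hρ).comp e.symm.injective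

end MinimalNormal

section Character

variable {G : Type} [Group G] {V : FDRep ℂ G} {χ : G → ℂ} (hχ : ∀ g, V.character g = χ g)
include hχ

lemma re_apply_one_eq_finrank : (χ 1).re = Module.finrank ℂ V := by
  rw [← hχ 1, FDRep.char_one, Complex.natCast_re]

lemma kerContains_of_le_ker {D : Subgroup G} (hD : D ≤ V.ρ.ker) : KerContains χ D :=
  fun n hn => by
    have hρ : V.ρ n = V.ρ 1 := (hD hn).trans (map_one V.ρ).symm
    rw [← hχ, ← hχ]
    exact congr_arg (LinearMap.trace ℂ V) hρ

end Character

/-- If a minimal normal subgroup `D` of `G` is a direct product of `s ≥ 2` copies of a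
non-abelian simple group, then every irreducible character of `G` whose kernel does not
contain `D` has degree at least `6`. -/
theorem stmt3 (G : Type) [Group G] [Fintype G] (D : Subgroup G) [hD : D.Normal]
    (hbot : D ≠ ⊥)
    (hmin : ∀ K : Subgroup G, K.Normal → K ≤ D → K = ⊥ ∨ K = D)
    (S : Type) [Group S] [Finite S] (hsimple : IsSimpleGroup S)
    (hnonab : ¬ ∀ a b : S, a * b = b * a)
    (s : ℕ) (hs : 2 ≤ s) (e : ↥D ≃* (Fin s → S)) :
    ∀ χ : G → ℂ, IsIrrChar G χ → ¬ KerContains χ D → (6 : ℝ) ≤ (χ 1).re := by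
  rintro χ ⟨V, -, hχ⟩ hker
  have : Nontrivial (Fin s) := Fin.nontrivial_iff_two_le.2 hs
  have hdeg : 6 ≤ Module.finrank ℂ V :=
    stmt3_general hmin (fun _ => hnonab) e V.ρ fun hD => hker (kerContains_of_le_ker hχ hD)
  rw [re_apply_one_eq_finrank hχ]
  exact_mod_cast hdeg
end

section
/- Let G = M × C be a direct product of finite groups with M isomorphic to Alt_5 or Alt_6, and let φ be an irreducible character of C such that the set of non-linear rational-valued irreducible constituents of the induced character φ^G is nonempty. Then the average degree of the non-linear rational-valued irreducible constituents of φ^G is at least 9/2; moreover, if φ(1) > 1 or M ≅ Alt_6, this average exceeds 9/2. -/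
open scoped BigOperators Classical
open CategoryTheory

/-!
The irreducible constituents of `φ^G` are the products `ψ ⊗ φ` with `ψ ∈ Irr(M)`, and `ψ ⊗ φ` is
rational-valued exactly when `ψ` and `φ` are, so the average in question is `φ(1)` times an
average of degrees of rational-valued characters of `M`.

Such a character takes integer values `k(g)`, with `k(g) ≡ k(1)` modulo `p` whenever `g` has
`p`-power order, `∑ k(g)² = |M|` and, unless `k = 1`, `∑ k(g) = 0`. Together with the numbers of
elements of each order in `Alt 5` and `Alt 6`, this forces `k(1) ≥ 4` for `k ≠ 1`. In `Alt 5`,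
equality in the congruence bounds on `∑ k(g)²` determines the character of degree `4`. In `Alt 6`,
if `k(1) = 4`, then equality in the bounds on `∑ (k(g) - 1)²` makes `k` equal to `1` on the
non-trivial elements of a Sylow `3`-subgroup, where `k` then sums to `4 + 8 = 12`, which is not
divisible by `9`.

A rational-valued character of degree `5` comes from a `2`-transitive action on `6` points: that
of `Alt 5` on its Sylow `5`-subgroups, or the natural action of `Alt 6`. So if `φ(1) = 1` the
average is at least `(4 + 5) / 2`, respectively `5`. If `φ(1) = d > 1`, the trivial `ψ` is the
only one of degree less than `4`, so the average is at least `d (1 + 4) / 2 ≥ 5`.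
-/

section FiniteOrderEndomorphism

open Module

variable {K V : Type*} [Field K] [AddCommGroup V] [Module K V]

theorem isSemisimple_of_pow_eq_one {n : ℕ} (hn : (n : K) ≠ 0) {f : End K V} (hf : f ^ n = 1) :
    f.IsSemisimple :=
  End.isSemisimple_of_squarefree_aeval_eq_zero
    (Polynomial.separable_X_pow_sub_C 1 hn one_ne_zero).squarefree (by simp [hf])

variable [IsAlgClosed K] [FiniteDimensional K V]

theorem exists_basis_eigenvectors_of_isSemisimple {f : End K V}
    (hf : f.IsSemisimple) :
    ∃ (b : Basis (Fin (finrank K V)) K V) (μ : Fin (finrank K V) → K),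
      ∀ i, f (b i) = μ i • b i := by
  have hint : DirectSum.IsInternal fun μ ↦ f.eigenspace μ :=
    DirectSum.isInternal_submodule_of_iSupIndep_of_iSup_eq_top
      f.eigenspaces_iSupIndep hf.iSup_eigenspace_eq_top
  let v := hint.collectedBasis fun μ ↦ finBasis K (f.eigenspace μ)
  let e := v.indexEquiv (finBasis K V)
  refine ⟨v.reindex e, fun i ↦ (e.symm i).1, fun i ↦ ?_⟩
  rw [Basis.reindex_apply]
  exact End.mem_eigenspace_iff.1 (hint.collectedBasis_mem _ _)

theorem exists_trace_pow_eq_sum_pow {n : ℕ} (hn : (n : K) ≠ 0)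
    {f : End K V} (hf : f ^ n = 1) :
    ∃ μ : Fin (finrank K V) → K, (∀ i, μ i ^ n = 1) ∧
      ∀ k, LinearMap.trace K V (f ^ k) = ∑ i, μ i ^ k := by
  obtain ⟨b, μ, hb⟩ :=
    exists_basis_eigenvectors_of_isSemisimple (isSemisimple_of_pow_eq_one hn hf)
  have hpow (k : ℕ) (i) : (f ^ k) (b i) = μ i ^ k • b i := by
    induction k with
    | zero => simp
    | succ k ih => rw [pow_succ', End.mul_apply, ih, map_smul, hb, smul_smul, pow_succ]
  refine ⟨μ, fun i ↦ ?_, fun k ↦ ?_⟩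
  · have h := hpow n i
    rw [hf, End.one_apply, eq_comm] at h
    exact smul_left_injective K (b.ne_zero i) (by simpa using h)
  · simp [LinearMap.trace_eq_matrix_trace K b, Matrix.trace, LinearMap.toMatrix_apply, hpow]

end FiniteOrderEndomorphism

section SumsOfRootsOfUnity

theorem exists_intCast_eq_of_isIntegral {q : ℚ} (hq : IsIntegral ℤ (q : ℂ)) :
    ∃ k : ℤ, (k : ℚ) = q :=
  IsIntegrallyClosed.isIntegral_iff.1
    ((isIntegral_algebraMap_iff (A := ℚ) (B := ℂ) (algebraMap ℚ ℂ).injective).1 hq)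

theorem dvd_of_eq_mul_of_isIntegral {a b : ℤ} {z : ℂ} (hz : IsIntegral ℤ z)
    (h : (b : ℂ) = a * z) : a ∣ b := by
  rcases eq_or_ne a 0 with rfl | ha
  · simp_all
  have hzq : z = (b / a : ℚ) := by
    rw [Rat.cast_div, Rat.cast_intCast, Rat.cast_intCast, h,
      mul_div_cancel_left₀ _ (Int.cast_ne_zero.2 ha)]
  obtain ⟨k, hk⟩ := exists_intCast_eq_of_isIntegral (hzq ▸ hz)
  rw [eq_div_iff (Int.cast_ne_zero.2 ha)] at hk
  exact ⟨k, by rw [mul_comm]; exact_mod_cast hk.symm⟩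

theorem dvd_sum_pow_sub_sum_pow {R ι : Type*} [CommRing R] {p : ℕ} (hp : p.Prime) (n : ℕ)
    (s : Finset ι) (x : ι → R) : (p : R) ∣ (∑ i ∈ s, x i) ^ p ^ n - ∑ i ∈ s, x i ^ p ^ n := by
  induction s using Finset.induction_on with
  | empty => simp [hp.ne_zero]
  | insert i s hi ih =>
    obtain ⟨r, hr⟩ := exists_add_pow_prime_pow_eq hp (x i) (∑ i ∈ s, x i) n
    rw [Finset.sum_insert hi, Finset.sum_insert hi, hr, add_assoc, add_sub_add_left_eq_sub,
      add_sub_right_comm]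
    exact dvd_add ih ⟨x i * (∑ i ∈ s, x i) * r, by ring⟩

variable {ι : Type*} [Fintype ι] {μ : ι → ℂ}

theorem exists_int_eq_sum_of_pow_eq_one {n : ℕ} (hn : 0 < n) (hμ : ∀ i, μ i ^ n = 1) {q : ℚ}
    (hq : ∑ i, μ i = q) : ∃ k : ℤ, ∑ i, μ i = k := by
  have hint (i) : IsIntegral ℤ (μ i) := .of_pow hn (by rw [hμ]; exact isIntegral_one)
  obtain ⟨k, hk⟩ := exists_intCast_eq_of_isIntegral (hq ▸ IsIntegral.sum _ fun i _ ↦ hint i)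
  exact ⟨k, by rw [hq, ← hk, Rat.cast_intCast]⟩

-- Modulo `p`, the `p ^ n`-th power map is additive on algebraic integers and sends each `μ i` to 1.
theorem modEq_card_of_sum_eq {p : ℕ} (hp : p.Prime) {n : ℕ} (hμ : ∀ i, μ i ^ p ^ n = 1) {k : ℤ}
    (hk : ∑ i, μ i = k) : k ≡ Fintype.card ι [ZMOD p] := by
  have := Fact.mk hp
  let z (i) : integralClosure ℤ ℂ :=
    ⟨μ i, .of_pow (pow_pos hp.pos n) (by rw [hμ]; exact isIntegral_one)⟩
  obtain ⟨r, hr⟩ := dvd_sum_pow_sub_sum_pow hp n Finset.univ z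
  have hr' : ((k ^ p ^ n - Fintype.card ι : ℤ) : ℂ) = (p : ℤ) * (r : ℂ) := by
    simpa [z, hk, hμ] using congrArg Subtype.val hr
  have hcard : k ^ p ^ n ≡ Fintype.card ι [ZMOD p] :=
    (Int.modEq_iff_dvd.2 (dvd_of_eq_mul_of_isIntegral r.2 hr')).symm
  have hfermat : k ^ p ^ n ≡ k [ZMOD p] := by
    rw [← ZMod.intCast_eq_intCast_iff]
    simp [ZMod.pow_card_pow]
  exact hfermat.symm.trans hcard

end SumsOfRootsOfUnity

section cInner

variable {G : Type} [Fintype G]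

theorem cInner_zero_left (f : G → ℂ) : cInner 0 f = 0 := by simp [cInner]

theorem cInner_add_left (f₁ f₂ f : G → ℂ) :
    cInner (f₁ + f₂) f = cInner f₁ f + cInner f₂ f := by
  simp [cInner, add_mul, Finset.sum_add_distrib, mul_add]

theorem cInner_sum_left (s : Multiset (G → ℂ)) (f : G → ℂ) :
    cInner s.sum f = (s.map fun χ ↦ cInner χ f).sum := by
  induction s using Multiset.induction_on with
  | empty => exact cInner_zero_left f
  | cons χ s ih => rw [Multiset.sum_cons, cInner_add_left, ih, Multiset.map_cons, Multiset.sum_cons]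

theorem cInner_const_mul_left (z : ℂ) (f₁ f₂ : G → ℂ) :
    cInner (fun g ↦ z * f₁ g) f₂ = z * cInner f₁ f₂ := by
  simp only [cInner, mul_left_comm z, Finset.mul_sum, mul_assoc]

theorem conj_cInner (f₁ f₂ : G → ℂ) : (starRingEnd ℂ) (cInner f₁ f₂) = cInner f₂ f₁ := by
  simp [cInner, mul_comm]

theorem cInner_const_mul_right (z : ℂ) (f₁ f₂ : G → ℂ) :
    cInner f₁ (fun g ↦ z * f₂ g) = (starRingEnd ℂ) z * cInner f₁ f₂ := by
  rw [← conj_cInner, cInner_const_mul_left, map_mul, conj_cInner]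

end cInner

section Characters

open Module Representation

variable {G : Type} [Group G]

section Representation

variable {V : Type} [AddCommGroup V] [Module ℂ V] [FiniteDimensional ℂ V]
  (ρ : Representation ℂ G V)

theorem exists_character_pow_eq_sum_pow {g : G} {n : ℕ} (hn : 0 < n) (hg : g ^ n = 1) :
    ∃ μ : Fin (finrank ℂ V) → ℂ, (∀ i, μ i ^ n = 1) ∧
      ∀ k, ρ.character (g ^ k) = ∑ i, μ i ^ k := by
  simp only [Representation.character, map_pow]
  exact exists_trace_pow_eq_sum_pow (Nat.cast_ne_zero.2 hn.ne') (by rw [← map_pow, hg, map_one])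

theorem character_modEq_finrank {p n : ℕ} (hp : p.Prime) {g : G} (hg : g ^ p ^ n = 1) {k : ℤ}
    (hk : ρ.character g = k) : k ≡ finrank ℂ V [ZMOD p] := by
  obtain ⟨μ, hμ, hchar⟩ := exists_character_pow_eq_sum_pow ρ (pow_pos hp.pos n) hg
  have hg : ρ.character g = ∑ i, μ i := by simpa only [pow_one] using hchar 1
  simpa using modEq_card_of_sum_eq hp hμ (hg ▸ hk)

variable [Finite G]

theorem character_inv (g : G) : ρ.character g⁻¹ = (starRingEnd ℂ) (ρ.character g) := by
  have hN : orderOf g ≠ 0 := (orderOf_pos g).ne'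
  obtain ⟨μ, hμ, hchar⟩ := exists_character_pow_eq_sum_pow ρ (orderOf_pos g) (pow_orderOf_eq_one g)
  have hinv (i) : μ i ^ (orderOf g - 1) = (starRingEnd ℂ) (μ i) := by
    rw [← Complex.inv_eq_conj (Complex.norm_eq_one_of_pow_eq_one (hμ i) hN)]
    exact eq_inv_of_mul_eq_one_left (by rw [pow_sub_one_mul hN, hμ])
  calc ρ.character g⁻¹ = ρ.character (g ^ (orderOf g - 1)) := by
        rw [← eq_inv_of_mul_eq_one_left (by rw [pow_sub_one_mul hN, pow_orderOf_eq_one])]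
    _ = (starRingEnd ℂ) (ρ.character (g ^ 1)) := by
        rw [hchar, hchar, map_sum]
        simp only [hinv, pow_one]
    _ = (starRingEnd ℂ) (ρ.character g) := by rw [pow_one]

theorem exists_int_eq_character {g : G} {q : ℚ} (hq : ρ.character g = q) :
    ∃ k : ℤ, ρ.character g = k := by
  obtain ⟨μ, hμ, hchar⟩ := exists_character_pow_eq_sum_pow ρ (orderOf_pos g) (pow_orderOf_eq_one g)
  have hg : ρ.character g = ∑ i, μ i := by simpa only [pow_one] using hchar 1
  rw [hg] at hq ⊢
  exact exists_int_eq_sum_of_pow_eq_one (orderOf_pos g) hμ hq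

theorem isIrrChar_character [Fintype G] [hρ : ρ.IsIrreducible] : IsIrrChar G ρ.character := by
  have := invertibleOfNonzero (NeZero.ne (Nat.card G : ℂ))
  refine ⟨FDRep.of ρ, (FDRep.simple_iff_char_is_norm_one _).2 ?_, fun _ ↦ rfl⟩
  have hnorm := char_orthonormal ρ ρ
  rwa [if_pos ⟨Representation.Equiv.refl ρ⟩, inv_mul_eq_one₀ (NeZero.ne _), eq_comm] at hnorm

end Representation

theorem character_eq_add_of_isCompl {V : Type} [AddCommGroup V] [Module ℂ V]
    [FiniteDimensional ℂ V] {ρ : Representation ℂ G V} {σ τ : Subrepresentation ρ}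
    (h : IsCompl σ τ) :
    ρ.character = σ.toRepresentation.character + τ.toRepresentation.character := by
  ext g
  let N (i : Bool) : Submodule ℂ V := bif i then σ.toSubmodule else τ.toSubmodule
  have hcompl : IsCompl σ.toSubmodule τ.toSubmodule :=
    .of_eq (congrArg (·.toSubmodule) h.inf_eq_bot) (congrArg (·.toSubmodule) h.sup_eq_top)
  have hint : DirectSum.IsInternal N :=
    (DirectSum.isInternal_submodule_iff_isCompl N (i := true) (j := false) (by simp)
      (by ext i; cases i <;> simp)).2 hcompl
  have htrace := LinearMap.trace_eq_sum_trace_restrict hint (f := ρ g) fun i ↦ by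
    cases i
    exacts [τ.apply_mem_toSubmodule g, σ.apply_mem_toSubmodule g]
  rwa [Fintype.sum_bool] at htrace

theorem exists_ne_bot_ne_top_of_not_isIrreducible {V : Type} [AddCommGroup V]
    [Module ℂ V] [Nontrivial V] {ρ : Representation ℂ G V} (hρ : ¬ρ.IsIrreducible) :
    ∃ σ : Subrepresentation ρ, σ ≠ ⊥ ∧ σ ≠ ⊤ := by
  by_contra! h
  have : Nontrivial (Subrepresentation ρ) :=
    ⟨⊥, ⊤, fun h ↦ bot_ne_top (congrArg (·.toSubmodule) h)⟩
  exact hρ ⟨fun σ ↦ or_iff_not_imp_left.2 (h σ)⟩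

theorem exists_multiset_isIrrChar_sum_eq_character {V : Type} [AddCommGroup V] [Module ℂ V]
    [FiniteDimensional ℂ V] [Fintype G] (ρ : Representation ℂ G V) :
    ∃ s : Multiset (G → ℂ), (∀ χ ∈ s, IsIrrChar G χ) ∧ s.sum = ρ.character := by
  rcases subsingleton_or_nontrivial V with hV | hV
  · refine ⟨0, by simp, ?_⟩
    ext g
    simp [Representation.character, Subsingleton.elim (ρ g) 0]
  by_cases hρ : ρ.IsIrreducible
  · exact ⟨{ρ.character}, by simpa using isIrrChar_character ρ, Multiset.sum_singleton _⟩
  obtain ⟨σ, hbot, htop⟩ := exists_ne_bot_ne_top_of_not_isIrreducible hρ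
  obtain ⟨τ, hστ⟩ := exists_isCompl σ
  have htop' : τ ≠ ⊤ := fun h ↦ hbot (eq_bot_of_isCompl_top (h ▸ hστ))
  have finrank_lt {σ : Subrepresentation ρ} (h : σ ≠ ⊤) :
      finrank ℂ σ.toSubmodule < finrank ℂ V :=
    Submodule.finrank_lt (Subrepresentation.toSubmodule_injective.ne h)
  have := finrank_lt htop
  have := finrank_lt htop'
  obtain ⟨s, hs, hs_sum⟩ := exists_multiset_isIrrChar_sum_eq_character σ.toRepresentation
  obtain ⟨t, ht, ht_sum⟩ := exists_multiset_isIrrChar_sum_eq_character τ.toRepresentation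
  refine ⟨s + t, fun χ hχ ↦ (Multiset.mem_add.1 hχ).elim (hs χ) (ht χ), ?_⟩
  rw [Multiset.sum_add, hs_sum, ht_sum, character_eq_add_of_isCompl hστ]
termination_by finrank ℂ V

namespace IsIrrChar

variable {χ ψ : G → ℂ}

theorem apply_conj (h : IsIrrChar G χ) (g x : G) : χ (x * g * x⁻¹) = χ g := by
  obtain ⟨V, -, hV⟩ := h
  rw [← hV, ← hV, FDRep.char_conj]

variable [Fintype G]

theorem apply_inv (h : IsIrrChar G χ) (g : G) : χ g⁻¹ = (starRingEnd ℂ) (χ g) := by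
  obtain ⟨V, -, hV⟩ := h
  rw [← hV, ← hV]
  exact character_inv V.ρ g

theorem cInner_eq (hχ : IsIrrChar G χ) (hψ : IsIrrChar G ψ) :
    cInner χ ψ = if χ = ψ then 1 else 0 := by
  have := invertibleOfNonzero (NeZero.ne (Nat.card G : ℂ))
  obtain ⟨V, hV, hVχ⟩ := id hχ
  obtain ⟨W, hW, hWψ⟩ := id hψ
  have hnorm : cInner χ χ = 1 := by
    have := FDRep.char_orthonormal V V
    rw [if_pos ⟨Iso.refl V⟩] at this
    simpa only [cInner, hVχ, hχ.apply_inv, Nat.card_eq_fintype_card] using this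
  have horth : cInner χ ψ = if Nonempty (V ≅ W) then 1 else 0 := by
    simpa only [cInner, hVχ, hWψ, hψ.apply_inv, Nat.card_eq_fintype_card] using
      FDRep.char_orthonormal V W
  by_cases hVW : Nonempty (V ≅ W)
  · have : χ = ψ := by
      rw [← funext hVχ, ← funext hWψ, FDRep.char_iso hVW.some]
    simp [← this, hnorm]
  · rw [if_neg hVW] at horth
    rw [horth, if_neg]
    rintro rfl
    simp [hnorm] at horth

theorem exists_nat_apply_one (h : IsIrrChar G χ) : ∃ n : ℕ, 0 < n ∧ χ 1 = n := by
  have hnorm := h.cInner_eq h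
  obtain ⟨V, -, hV⟩ := h
  refine ⟨finrank ℂ V, pos_iff_ne_zero.2 fun h0 ↦ ?_, by rw [← hV, FDRep.char_one]⟩
  have hVsub : Subsingleton V := finrank_zero_iff.1 h0
  have hχ : χ = 0 := by
    ext g
    simp [← hV, FDRep.character, Subsingleton.elim (V.ρ g) 0]
  simp [hχ, cInner_zero_left] at hnorm

theorem exists_eq_intCast (h : IsIrrChar G χ) (hr : RatValued χ) :
    ∃ k : G → ℤ, χ = fun g ↦ (k g : ℂ) := by
  obtain ⟨V, -, hV⟩ := h
  have hint (g : G) : ∃ k : ℤ, χ g = k := by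
    obtain ⟨q, hq⟩ := hr g
    rw [← hV] at hq ⊢
    exact exists_int_eq_character V.ρ hq
  choose k hk using hint
  exact ⟨k, funext hk⟩

end IsIrrChar

variable [Fintype G]

theorem cInner_multiset_sum_eq_count {s : Multiset (G → ℂ)} (hs : ∀ χ ∈ s, IsIrrChar G χ)
    {χ : G → ℂ} (hχ : IsIrrChar G χ) : cInner s.sum χ = s.count χ := by
  induction s using Multiset.induction_on with
  | empty => simp [cInner_zero_left]
  | cons ψ s ih =>
    rw [Multiset.forall_mem_cons] at hs
    rw [Multiset.sum_cons, cInner_add_left, ih hs.2, hs.1.cInner_eq hχ, Multiset.count_cons]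
    by_cases h : ψ = χ
    · simp [h, add_comm]
    · simp [h, Ne.symm h]

theorem cInner_multiset_sum_self {s : Multiset (G → ℂ)} (hs : ∀ χ ∈ s, IsIrrChar G χ) :
    cInner s.sum s.sum = (s.map fun χ ↦ s.count χ).sum := by
  rw [cInner_sum_left, Nat.cast_multiset_sum, Multiset.map_map]
  refine congrArg Multiset.sum (Multiset.map_congr rfl fun χ hχ ↦ ?_)
  rw [← conj_cInner, cInner_multiset_sum_eq_count hs (hs χ hχ), Complex.conj_natCast,
    Function.comp_apply]

theorem isIrrChar_multiset_sum_of_cInner_self_eq_one {s : Multiset (G → ℂ)}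
    (hs : ∀ χ ∈ s, IsIrrChar G χ) (h : cInner s.sum s.sum = 1) : IsIrrChar G s.sum := by
  have hnorm : (s.map fun χ ↦ s.count χ).sum = 1 := by
    exact_mod_cast cInner_multiset_sum_self hs ▸ h
  have hle : Multiset.card s ≤ 1 := by
    have := (s.map fun χ ↦ s.count χ).card_nsmul_le_sum (a := 1)
      (by simpa using fun χ ↦ Multiset.one_le_count_iff_mem.2)
    simpa [hnorm] using this
  have hne : Multiset.card s ≠ 0 := by
    intro h0
    simp [Multiset.card_eq_zero.1 h0] at hnorm
  obtain ⟨χ, rfl⟩ := Multiset.card_eq_one.1 (show Multiset.card s = 1 by omega)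
  simpa using hs

theorem isIrrChar_character_of_cInner_self_eq_one {V : Type} [AddCommGroup V] [Module ℂ V]
    [FiniteDimensional ℂ V] (ρ : Representation ℂ G V)
    (h : cInner ρ.character ρ.character = 1) : IsIrrChar G ρ.character := by
  obtain ⟨s, hs, hsum⟩ := exists_multiset_isIrrChar_sum_eq_character ρ
  rw [← hsum] at h ⊢
  exact isIrrChar_multiset_sum_of_cInner_self_eq_one hs h

theorem isIrrChar_one : IsIrrChar G 1 := by
  have hchar : (Representation.trivial ℂ G ℂ).character = 1 := by
    ext g
    simp [Representation.character, Representation.trivial]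
  rw [← hchar]
  exact isIrrChar_character_of_cInner_self_eq_one _ (by simp [hchar, cInner])

end Characters

section PermutationCharacters

open Representation MulAction

variable {G : Type} [Group G] (X : Type) [MulAction G X]

variable (G) in
/-- The character of the permutation representation of `G` on the finite set `X`. -/
noncomputable def permChar (g : G) : ℂ := Nat.card (fixedBy X g)

theorem character_ofMulAction [Finite X] : (ofMulAction ℂ G X).character = permChar G X := by
  have := Fintype.ofFinite X
  ext g
  rw [Representation.character, LinearMap.trace_eq_matrix_trace ℂ (MonoidAlgebra.basis X ℂ)]
  simp [Matrix.trace, LinearMap.toMatrix_apply, permChar, MulAction.fixedBy, MonoidAlgebra.basis,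
    Finsupp.single_apply, Fintype.card_subtype]

theorem permChar_prod (Y : Type) [MulAction G Y] (g : G) :
    permChar G (X × Y) g = permChar G X g * permChar G Y g := by
  have : Nat.card (fixedBy (X × Y) g) = Nat.card (fixedBy X g × fixedBy Y g) :=
    Nat.card_congr ⟨fun x ↦ ⟨⟨x.1.1, congrArg Prod.fst x.2⟩, ⟨x.1.2, congrArg Prod.snd x.2⟩⟩,
      fun x ↦ ⟨(x.1, x.2), Prod.ext x.1.2 x.2.2⟩, fun _ ↦ rfl, fun _ ↦ rfl⟩
  simp [permChar, this, Nat.card_prod]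

theorem card_orbitRel_quotient_eq_one [IsPretransitive G X] [Nonempty X] :
    Nat.card (orbitRel.Quotient G X) = 1 := by
  obtain ⟨_⟩ := (pretransitive_iff_unique_quotient_of_nonempty G X).1 ‹_›
  exact Nat.card_unique

theorem card_orbitRel_quotient_prod_self_eq_two [IsMultiplyPretransitive G X 2] [Nontrivial X] :
    Nat.card (orbitRel.Quotient G (X × X)) = 2 := by
  have : IsPretransitive G X := isPretransitive_of_is_two_pretransitive
  let f : orbitRel.Quotient G (X × X) → Prop := Quotient.lift (fun x ↦ x.1 = x.2) (by
    rintro _ x ⟨g, rfl⟩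
    simp)
  have hf : f.Bijective := by
    constructor
    · rintro ⟨a, b⟩ ⟨c, d⟩ h
      replace h : (a = b) = (c = d) := h
      refine Quotient.sound ?_
      by_cases hab : a = b
      · obtain rfl : c = d := by rwa [← h]
        obtain ⟨g, hg⟩ := exists_smul_eq G c a
        exact ⟨g, by simp [← hab, hg]⟩
      · obtain ⟨g, hga, hgb⟩ := is_two_pretransitive_iff.1 ‹_› (h ▸ hab) hab
        exact ⟨g, Prod.ext hga hgb⟩
    · obtain ⟨a, b, hab⟩ := exists_pair_ne X
      intro p
      by_cases hp : p
      · exact ⟨⟦(a, a)⟧, by simp [f, hp]⟩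
      · exact ⟨⟦(a, b)⟧, by simp [f, hp, hab]⟩
  rw [Nat.card_congr (Equiv.ofBijective f hf), Nat.card_eq_fintype_card, Fintype.card_prop]

variable [Fintype G]

variable (G) in
theorem cInner_permChar_one [Finite X] :
    cInner (permChar G X) 1 = Nat.card (orbitRel.Quotient G X) := by
  have := Fintype.ofFinite X
  have hburnside := sum_card_fixedBy_eq_card_orbits_mul_card_group G X
  rw [cInner, inv_mul_eq_iff_eq_mul₀ (NeZero.ne _)]
  simp only [permChar, Pi.one_apply, map_one, mul_one, Nat.card_eq_fintype_card]
  exact_mod_cast hburnside.trans (mul_comm _ _)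

variable (G) in
theorem cInner_permChar_self [Finite X] :
    cInner (permChar G X) (permChar G X) = Nat.card (orbitRel.Quotient G (X × X)) := by
  rw [← cInner_permChar_one, cInner, cInner]
  simp only [permChar_prod]
  simp [permChar]

theorem exists_isIrrChar_cInner_ne_zero {f : G → ℂ} (hf : f 1 ≠ 0) :
    ∃ χ, IsIrrChar G χ ∧ cInner χ f ≠ 0 := by
  obtain ⟨s, hs, hsum⟩ := exists_multiset_isIrrChar_sum_eq_character (ofMulAction ℂ G G)
  have hreg (g : G) : permChar G G g = if g = 1 then (Nat.card G : ℂ) else 0 := by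
    split_ifs with h <;> simp [permChar, fixedBy, h]
  have hinner : cInner (permChar G G) f = (starRingEnd ℂ) (f 1) := by
    simp [cInner, hreg]
  by_contra! h
  rw [← character_ofMulAction, ← hsum, cInner_sum_left, eq_comm] at hinner
  refine (map_ne_zero (starRingEnd ℂ)).2 hf (hinner.trans (Multiset.sum_eq_zero fun z hz ↦ ?_))
  obtain ⟨χ, hχ, rfl⟩ := Multiset.mem_map.1 hz
  exact h χ (hs χ hχ)

theorem isIrrChar_permChar_sub_one [Finite X] [IsMultiplyPretransitive G X 2] [Nontrivial X] :
    IsIrrChar G (permChar G X - 1) := by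
  obtain ⟨s, hs, hsum⟩ := exists_multiset_isIrrChar_sum_eq_character (ofMulAction ℂ G X)
  rw [character_ofMulAction] at hsum
  have : IsPretransitive G X := isPretransitive_of_is_two_pretransitive
  have h_one : cInner s.sum 1 = 1 := by
    rw [hsum, cInner_permChar_one, card_orbitRel_quotient_eq_one, Nat.cast_one]
  have h_self : cInner s.sum s.sum = 2 := by
    rw [hsum, cInner_permChar_self, card_orbitRel_quotient_prod_self_eq_two, Nat.cast_ofNat]
  have h_mem : 1 ∈ s := by
    rw [cInner_multiset_sum_eq_count hs isIrrChar_one] at h_one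
    exact Multiset.count_pos.1 (by simp [Nat.cast_eq_one.1 h_one])
  obtain ⟨t, rfl⟩ := Multiset.exists_cons_of_mem h_mem
  rw [← hsum, Multiset.sum_cons, add_sub_cancel_left]
  refine isIrrChar_multiset_sum_of_cInner_self_eq_one (fun χ hχ ↦ hs χ (by simp [hχ])) ?_
  rw [Multiset.sum_cons, cInner_add_left, isIrrChar_one.cInner_eq isIrrChar_one, if_pos rfl,
    add_eq_left] at h_one
  have h_one' : cInner 1 t.sum = 0 := by rw [← conj_cInner, h_one, map_zero]
  have h_sum : cInner (1 + t.sum) 1 = 1 := by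
    rw [cInner_add_left, h_one, isIrrChar_one.cInner_eq isIrrChar_one, if_pos rfl, add_zero]
  rw [Multiset.sum_cons, cInner_add_left, ← conj_cInner, h_sum, map_one,
    ← conj_cInner (1 + t.sum), cInner_add_left, h_one', zero_add, conj_cInner] at h_self
  linear_combination h_self

end PermutationCharacters

section DirectProducts

open Representation

theorem exists_mulEquiv_prod {G A : Type} [Group G] [Group A] {M C : Subgroup G} [M.Normal]
    [C.Normal] (hMC : M ⊓ C = ⊥) (hsup : M ⊔ C = ⊤) (f : M ≃* A) :
    ∃ e : G ≃* A × C, ∀ c : C, e.symm (1, c) = c := by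
  have hcomm (a : A) (c : C) : Commute ((M.subtype.comp f.symm.toMonoidHom) a) (C.subtype c) :=
    Subgroup.commute_of_normal_of_disjoint M C ‹_› ‹_› (disjoint_iff.2 hMC) _ c (f.symm a).2 c.2
  let F : A × C →* G := MonoidHom.noncommCoprod (M.subtype.comp f.symm.toMonoidHom) C.subtype hcomm
  have hrange : (M.subtype.comp f.symm.toMonoidHom).range = M := by
    rw [MonoidHom.range_comp, MonoidHom.range_eq_top.2 f.symm.surjective, ← MonoidHom.range_eq_map,
      Subgroup.range_subtype]
  have hF : F.range = ⊤ := by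
    rw [MonoidHom.noncommCoprod_range, hrange, Subgroup.range_subtype, hsup]
  have hF' : Function.Injective F := by
    rw [MonoidHom.noncommCoprod_injective, hrange, Subgroup.range_subtype, disjoint_iff]
    exact ⟨M.subtype_injective.comp f.symm.injective, C.subtype_injective, hMC⟩
  refine ⟨(MulEquiv.ofBijective F ⟨hF', MonoidHom.range_eq_top.1 hF⟩).symm, fun c ↦ ?_⟩
  simp [F]

variable {G A : Type} [Group G] [Group A] [Fintype G] [Fintype A]

section prodChar

variable {C : Type} [Group C]

/-- The character `ψ ⊗ φ` of a group `G` identified with a direct product by `e : G ≃* A × C`. -/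
def prodChar (e : G ≃* A × C) (ψ : A → ℂ) (φ : C → ℂ) (g : G) : ℂ := ψ (e g).1 * φ (e g).2

variable [Fintype C] (e : G ≃* A × C) {ψ ψ' : A → ℂ} {φ φ' : C → ℂ}

theorem cInner_prodChar_left (χ : G → ℂ) :
    cInner (prodChar e ψ φ) χ = cInner ψ fun a ↦ cInner (fun c ↦ χ (e.symm (a, c))) φ := by
  have hinner (a : A) : ∑ c, ψ a * φ c * (starRingEnd ℂ) (χ (e.symm (a, c))) =
      Fintype.card C * (ψ a * (starRingEnd ℂ) (cInner (fun c ↦ χ (e.symm (a, c))) φ)) := by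
    rw [conj_cInner, cInner, mul_left_comm, mul_inv_cancel_left₀ (NeZero.ne _), Finset.mul_sum]
    simp only [mul_assoc]
  rw [cInner, cInner, ← e.symm.toEquiv.sum_comp, Fintype.sum_prod_type,
    Fintype.card_congr e.toEquiv, Fintype.card_prod]
  simp only [prodChar, MulEquiv.toEquiv_eq_coe, MulEquiv.toEquiv_symm, MulEquiv.coe_toEquiv_symm,
    MulEquiv.apply_symm_apply, hinner, ← Finset.mul_sum, Nat.cast_mul, mul_inv_rev]
  field_simp

theorem cInner_prodChar :
    cInner (prodChar e ψ φ) (prodChar e ψ' φ') = cInner ψ ψ' * cInner φ φ' := by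
  have h (a : A) : cInner (fun c ↦ prodChar e ψ' φ' (e.symm (a, c))) φ = cInner φ' φ * ψ' a := by
    simp only [prodChar, e.apply_symm_apply, cInner_const_mul_left, mul_comm]
  simp only [cInner_prodChar_left, h, cInner_const_mul_right, conj_cInner]
  exact mul_comm _ _

theorem IsIrrChar.prodChar (hψ : IsIrrChar A ψ) (hφ : IsIrrChar C φ) :
    IsIrrChar G (prodChar e ψ φ) := by
  have hnorm : cInner (_root_.prodChar e ψ φ) (_root_.prodChar e ψ φ) = 1 := by
    rw [cInner_prodChar, hψ.cInner_eq hψ, hφ.cInner_eq hφ, if_pos rfl, if_pos rfl, one_mul]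
  obtain ⟨V, -, hV⟩ := hψ
  obtain ⟨W, -, hW⟩ := hφ
  let ρ : Representation ℂ G V := V.ρ.comp ((MonoidHom.fst A C).comp e.toMonoidHom)
  let σ : Representation ℂ G W := W.ρ.comp ((MonoidHom.snd A C).comp e.toMonoidHom)
  have hchar : (ρ.tprod σ).character = _root_.prodChar e ψ φ := by
    ext g
    rw [char_tensor, Pi.mul_apply, _root_.prodChar, ← hV, ← hW]
    rfl
  rw [← hchar] at hnorm ⊢
  exact isIrrChar_character_of_cInner_self_eq_one _ hnorm

theorem exists_eq_prodChar (hφ : IsIrrChar C φ) {χ : G → ℂ} (hχ : IsIrrChar G χ)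
    (h : cInner φ (fun c ↦ χ (e.symm (1, c))) ≠ 0) :
    ∃ ψ, IsIrrChar A ψ ∧ χ = prodChar e ψ φ := by
  obtain ⟨ψ, hψ, hne⟩ := exists_isIrrChar_cInner_ne_zero
    (f := fun a ↦ cInner (fun c ↦ χ (e.symm (a, c))) φ)
    (by rw [← conj_cInner]; exact (map_ne_zero _).2 h)
  refine ⟨ψ, hψ, ?_⟩
  rw [← cInner_prodChar_left, (hψ.prodChar e hφ).cInner_eq hχ, ne_eq, ite_eq_right_iff] at hne
  by_contra hcon
  exact hne fun h ↦ absurd h.symm hcon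

omit [Fintype G] in
theorem ratValued_prodChar_iff (hψ : IsIrrChar A ψ) (hφ : IsIrrChar C φ) :
    RatValued (prodChar e ψ φ) ↔ RatValued ψ ∧ RatValued φ := by
  refine ⟨fun h ↦ ⟨fun a ↦ ?_, fun c ↦ ?_⟩, fun h g ↦ ?_⟩
  · obtain ⟨n, hn, hφn⟩ := hφ.exists_nat_apply_one
    obtain ⟨q, hq⟩ := h (e.symm (a, 1))
    refine ⟨q / n, ?_⟩
    simp [← hq, prodChar, hφn, hn.ne']
  · obtain ⟨n, hn, hψn⟩ := hψ.exists_nat_apply_one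
    obtain ⟨q, hq⟩ := h (e.symm (1, c))
    refine ⟨q / n, ?_⟩
    simp [← hq, prodChar, hψn, hn.ne']
  · obtain ⟨a, ha⟩ := h.1 (e g).1
    obtain ⟨b, hb⟩ := h.2 (e g).2
    exact ⟨a * b, by simp [prodChar, ha, hb]⟩

end prodChar

omit [Fintype A] in
theorem cInner_ind {N : Subgroup G} (f : N → ℂ) {χ : G → ℂ}
    (hχ : ∀ g x, χ (x * g * x⁻¹) = χ g) :
    cInner (_root_.Ind N f) χ = cInner f (fun n ↦ χ n) := by
  have hsum (x : G) : ∑ g, (if h : x⁻¹ * g * x ∈ N then f ⟨x⁻¹ * g * x, h⟩ else 0) *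
      (starRingEnd ℂ) (χ g) = ∑ n : N, f n * (starRingEnd ℂ) (χ n) := by
    symm
    refine Fintype.sum_of_injective (fun n : N ↦ x * n * x⁻¹) ?_ _ _ (fun g hg ↦ ?_) fun n ↦ ?_
    · exact (MulAut.conj x).injective.comp Subtype.val_injective
    · rw [dif_neg fun h ↦ hg ⟨⟨_, h⟩, by group⟩, zero_mul]
    · have hn : x⁻¹ * (x * n * x⁻¹) * x = n := by group
      simp only [hn, n.2, hχ, dif_pos]
  calc cInner (_root_.Ind N f) χ
    _ = (Fintype.card G : ℂ)⁻¹ * ((Nat.card N : ℂ)⁻¹ * ∑ x : G, ∑ g,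
          (if h : x⁻¹ * g * x ∈ N then f ⟨x⁻¹ * g * x, h⟩ else 0) * (starRingEnd ℂ) (χ g)) := by
        simp only [cInner, _root_.Ind, mul_assoc (Nat.card N : ℂ)⁻¹, Finset.sum_mul,
          ← Finset.mul_sum]
        rw [Finset.sum_comm]
    _ = cInner f (fun n ↦ χ n) := by
        simp only [hsum, Finset.sum_const, Finset.card_univ, nsmul_eq_mul, cInner,
          Nat.card_eq_fintype_card]
        field_simp

variable {C : Subgroup G} (e : G ≃* A × C) (he : ∀ c : C, e.symm (1, c) = c) {φ : C → ℂ}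
  (hφ : IsIrrChar C φ)

include he hφ in
theorem isConstituent_ind_iff {χ : G → ℂ} :
    IsConstituent (_root_.Ind C φ) χ ↔ ∃ ψ, IsIrrChar A ψ ∧ χ = prodChar e ψ φ := by
  constructor
  · rintro ⟨hχ, hne⟩
    rw [cInner_ind φ hχ.apply_conj] at hne
    exact exists_eq_prodChar e hφ hχ (by simpa only [he] using hne)
  · rintro ⟨ψ, hψ, rfl⟩
    have hirr := hψ.prodChar e hφ
    refine ⟨hirr, ?_⟩
    obtain ⟨n, hn, hψn⟩ := hψ.exists_nat_apply_one
    have hres (c : C) : prodChar e ψ φ c = n * φ c := by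
      rw [prodChar, ← he c, e.apply_symm_apply, hψn]
    simpa [cInner_ind φ hirr.apply_conj, hres, cInner_const_mul_right, hφ.cInner_eq hφ] using hn.ne'

end DirectProducts

section Average

/- The one element below `b` contributes at least `a`, and some other element at least `b`. -/
theorem add_div_two_le_sum_div_card {ι : Type*} {s : Finset ι} {f : ι → ℝ} {a b : ℝ} (hab : a ≤ b)
    (ha : ∀ i ∈ s, a ≤ f i) (hlt : ∀ i ∈ s, ∀ j ∈ s, f i < b → f j < b → i = j)
    (hb : ∃ i ∈ s, b ≤ f i) : (a + b) / 2 ≤ (∑ i ∈ s, f i) / s.card := by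
  obtain ⟨j, hj, hjb⟩ := hb
  rw [le_div_iff₀ (by exact_mod_cast Finset.card_pos.2 ⟨j, hj⟩)]
  by_cases h : ∃ i ∈ s, f i < b
  · obtain ⟨i, hi, hib⟩ := h
    have hji : j ∈ s.erase i := Finset.mem_erase.2 ⟨by rintro rfl; exact hib.not_ge hjb, hj⟩
    have hcard : (1 : ℝ) ≤ (s.erase i).card := by exact_mod_cast Finset.card_pos.2 ⟨j, hji⟩
    have hsum : (s.erase i).card • b ≤ ∑ k ∈ s.erase i, f k := by
      refine Finset.card_nsmul_le_sum _ _ _ fun k hk ↦ ?_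
      rw [Finset.mem_erase] at hk
      exact not_lt.1 fun hkb ↦ hk.1 (hlt k hk.2 i hi hkb hib)
    rw [nsmul_eq_mul] at hsum
    rw [← Finset.add_sum_erase s f hi, ← Finset.card_erase_add_one hi]
    push_cast
    nlinarith [ha i hi]
  · have hsum : s.card • b ≤ ∑ k ∈ s, f k :=
      Finset.card_nsmul_le_sum _ _ _ fun k hk ↦ not_lt.1 fun hkb ↦ h ⟨k, hk, hkb⟩
    rw [nsmul_eq_mul] at hsum
    nlinarith [(Nat.cast_nonneg s.card : (0 : ℝ) ≤ s.card)]

variable {G A : Type} [Group G] [Group A] {C : Subgroup G}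
  {e : G ≃* A × C} {φ : C → ℂ} {S : Finset (G → ℂ)}

theorem le_average_prodChar {d : ℕ} (hd : 0 < d) (hφd : φ 1 = d) {a b : ℝ} (hab : a ≤ b)
    (hS : ∀ χ : G → ℂ, χ ∈ S ↔
      ∃ ψ, IsIrrChar A ψ ∧ RatValued ψ ∧ 1 < (ψ 1 * φ 1).re ∧ χ = prodChar e ψ φ)
    (ha : ∀ ψ, IsIrrChar A ψ → RatValued ψ → 1 < (ψ 1 * φ 1).re → a ≤ (ψ 1).re)
    (hlt : {ψ | IsIrrChar A ψ ∧ RatValued ψ ∧ 1 < (ψ 1 * φ 1).re ∧ (ψ 1).re < b}.Subsingleton)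
    (hb : ∃ ψ, IsIrrChar A ψ ∧ RatValued ψ ∧ 1 < (ψ 1 * φ 1).re ∧ b ≤ (ψ 1).re) :
    (a + b) / 2 * d ≤ (∑ χ ∈ S, (χ 1).re) / S.card := by
  have hdeg (ψ : A → ℂ) : (prodChar e ψ φ 1).re = (ψ 1).re * d := by simp [prodChar, hφd]
  have hd : (0 : ℝ) < d := Nat.cast_pos.2 hd
  rw [div_mul_eq_mul_div, add_mul]
  refine add_div_two_le_sum_div_card (by gcongr) (fun χ hχ ↦ ?_) (fun χ hχ χ' hχ' h h' ↦ ?_) ?_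
  · obtain ⟨ψ, hψ, hr, h1, rfl⟩ := (hS χ).1 hχ
    rw [hdeg]
    gcongr
    exact ha ψ hψ hr h1
  · obtain ⟨ψ, hψ, hr, h1, rfl⟩ := (hS χ).1 hχ
    obtain ⟨ψ', hψ', hr', h1', rfl⟩ := (hS χ').1 hχ'
    rw [hdeg, mul_lt_mul_iff_left₀ hd] at h h'
    rw [hlt ⟨hψ, hr, h1, h⟩ ⟨hψ', hr', h1', h'⟩]
  · obtain ⟨ψ, hψ, hr, h1, hψb⟩ := hb
    refine ⟨_, (hS _).2 ⟨ψ, hψ, hr, h1, rfl⟩, ?_⟩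
    rw [hdeg]
    gcongr

theorem add_five_div_two_le_average (hφ1 : φ 1 = 1) {a : ℝ} (ha : a ≤ 5)
    (hS : ∀ χ : G → ℂ, χ ∈ S ↔
      ∃ ψ, IsIrrChar A ψ ∧ RatValued ψ ∧ 1 < (ψ 1 * φ 1).re ∧ χ = prodChar e ψ φ)
    (hle : ∀ ψ, IsIrrChar A ψ → RatValued ψ → ψ ≠ 1 → a ≤ (ψ 1).re)
    (hlt : {ψ | IsIrrChar A ψ ∧ RatValued ψ ∧ ψ ≠ 1 ∧ (ψ 1).re < 5}.Subsingleton)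
    (h5 : ∃ ψ, IsIrrChar A ψ ∧ RatValued ψ ∧ ψ 1 = 5) :
    (a + 5) / 2 ≤ (∑ χ ∈ S, (χ 1).re) / S.card := by
  have hne {ψ : A → ℂ} (h : 1 < (ψ 1 * φ 1).re) : ψ ≠ 1 := by
    rintro rfl
    simp [hφ1] at h
  have := le_average_prodChar (d := 1) one_pos (by simpa using hφ1) ha hS
    (fun ψ hψ hr h ↦ hle ψ hψ hr (hne h)) (hlt.anti fun ψ h ↦ ⟨h.1, h.2.1, hne h.2.2.1, h.2.2.2⟩)
    (h5.imp fun ψ ⟨hψ, hr, h⟩ ↦ ⟨hψ, hr, by norm_num [h, hφ1], by norm_num [h]⟩)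
  simpa using this

variable [Fintype A]

theorem nine_div_two_lt_average_of_one_lt {d : ℕ} (hd : 1 < d) (hφd : φ 1 = d)
    (hS : ∀ χ : G → ℂ, χ ∈ S ↔
      ∃ ψ, IsIrrChar A ψ ∧ RatValued ψ ∧ 1 < (ψ 1 * φ 1).re ∧ χ = prodChar e ψ φ)
    (h4 : ∀ ψ, IsIrrChar A ψ → RatValued ψ → ψ ≠ 1 → 4 ≤ (ψ 1).re)
    (h5 : ∃ ψ, IsIrrChar A ψ ∧ RatValued ψ ∧ ψ 1 = 5) :
    (9 / 2 : ℝ) < (∑ χ ∈ S, (χ 1).re) / S.card := by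
  have hd2 : (2 : ℝ) ≤ d := by exact_mod_cast hd
  have havg : (1 + 4) / 2 * (d : ℝ) ≤ (∑ χ ∈ S, (χ 1).re) / S.card := by
    refine le_average_prodChar (by omega) hφd (by norm_num) hS (fun ψ hψ _ _ ↦ ?_) ?_ ?_
    · obtain ⟨n, hn, h⟩ := hψ.exists_nat_apply_one
      rw [h, Complex.natCast_re]
      exact_mod_cast hn
    · have hone {ψ : A → ℂ} (hψ : IsIrrChar A ψ) (hr : RatValued ψ) (hlt : (ψ 1).re < 4) :
          ψ = 1 := of_not_not fun hne ↦ (h4 ψ hψ hr hne).not_gt hlt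
      exact fun ψ hψ ψ' hψ' ↦ (hone hψ.1 hψ.2.1 hψ.2.2.2).trans
        (hone hψ'.1 hψ'.2.1 hψ'.2.2.2).symm
    · obtain ⟨ψ, hψ, hr, h⟩ := h5
      refine ⟨ψ, hψ, hr, ?_, by norm_num [h]⟩
      norm_num [h, hφd]
      linarith
  linarith

variable [Fintype G]

theorem mem_iff_exists_prodChar (he : ∀ c : C, e.symm (1, c) = c) (hφ : IsIrrChar C φ)
    (hS : ∀ χ : G → ℂ, χ ∈ S ↔
      IsConstituent (_root_.Ind C φ) χ ∧ RatValued χ ∧ 1 < (χ 1).re)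
    (hne : S.Nonempty) (χ : G → ℂ) :
    χ ∈ S ↔ ∃ ψ, IsIrrChar A ψ ∧ RatValued ψ ∧ 1 < (ψ 1 * φ 1).re ∧ χ = prodChar e ψ φ := by
  have hφr : RatValued φ := by
    obtain ⟨χ, hχ⟩ := hne
    obtain ⟨hχ, hr, -⟩ := (hS χ).1 hχ
    obtain ⟨ψ, hψ, rfl⟩ := (isConstituent_ind_iff e he hφ).1 hχ
    exact ((ratValued_prodChar_iff e hψ hφ).1 hr).2
  have hone (ψ : A → ℂ) : prodChar e ψ φ 1 = ψ 1 * φ 1 := by simp [prodChar]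
  rw [hS, isConstituent_ind_iff e he hφ]
  constructor
  · rintro ⟨⟨ψ, hψ, rfl⟩, hr, h1⟩
    exact ⟨ψ, hψ, ((ratValued_prodChar_iff e hψ hφ).1 hr).1, hone ψ ▸ h1, rfl⟩
  · rintro ⟨ψ, hψ, hr, h1, rfl⟩
    exact ⟨⟨ψ, hψ, rfl⟩, (ratValued_prodChar_iff e hψ hφ).2 ⟨hr, hφr⟩, (hone ψ).symm ▸ h1⟩

end Average

section IntegerCharacters

open Finset

variable {G : Type} [Group G] [Fintype G] {k : G → ℤ}

namespace IsIrrChar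

omit [Fintype G] in
theorem intCast_modEq (hk : IsIrrChar G fun g ↦ (k g : ℂ)) {p n : ℕ} (hp : p.Prime) {g : G}
    (hg : g ^ p ^ n = 1) : k g ≡ k 1 [ZMOD p] := by
  obtain ⟨V, -, hV⟩ := hk
  have hone : k 1 = Module.finrank ℂ V := by
    have h : (k 1 : ℂ) = Module.finrank ℂ V := (hV 1).symm.trans (FDRep.char_one V)
    exact_mod_cast h
  rw [hone]
  exact character_modEq_finrank V.ρ hp hg (hV g)

omit [Fintype G] in
theorem modEq_of_orderOf_eq (hk : IsIrrChar G fun g ↦ (k g : ℂ)) {p : ℕ} (hp : p.Prime) {g : G}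
    (hg : orderOf g = p) : k g ≡ k 1 [ZMOD p] :=
  hk.intCast_modEq hp (n := 1) (by rw [pow_one, ← hg, pow_orderOf_eq_one])

theorem sum_sq_eq_card (hk : IsIrrChar G fun g ↦ (k g : ℂ)) :
    ∑ g, k g ^ 2 = Fintype.card G := by
  have hnorm := hk.cInner_eq hk
  rw [if_pos rfl, cInner, inv_mul_eq_one₀ (NeZero.ne _)] at hnorm
  simp only [map_intCast, ← pow_two] at hnorm
  exact_mod_cast hnorm.symm

theorem sum_eq_zero (hk : IsIrrChar G fun g ↦ (k g : ℂ)) (hne : k ≠ 1) : ∑ g, k g = 0 := by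
  have horth := hk.cInner_eq isIrrChar_one
  rw [if_neg fun h ↦ hne (funext fun g ↦ by simpa using congrFun h g), cInner] at horth
  simpa [NeZero.ne, ← Int.cast_sum] using horth

theorem intCast_apply_one_pos (hk : IsIrrChar G fun g ↦ (k g : ℂ)) : 0 < k 1 := by
  obtain ⟨n, hn, h⟩ := hk.exists_nat_apply_one
  exact (Int.cast_injective (α := ℂ) (by exact_mod_cast h) : k 1 = n) ▸ Int.natCast_pos.2 hn

theorem card_subgroup_dvd_sum (hk : IsIrrChar G fun g ↦ (k g : ℂ)) (H : Subgroup G) :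
    (Nat.card H : ℤ) ∣ ∑ h : H, k h := by
  obtain ⟨V, -, hV⟩ := hk
  obtain ⟨s, hs, hsum⟩ := exists_multiset_isIrrChar_sum_eq_character (V.ρ.comp H.subtype)
  have hcount := cInner_multiset_sum_eq_count hs isIrrChar_one
  have hres (h : H) : s.sum h = k h := by rw [hsum]; exact hV h
  refine ⟨s.count 1, ?_⟩
  rw [cInner, inv_mul_eq_iff_eq_mul₀ (NeZero.ne _), ← Nat.card_eq_fintype_card] at hcount
  simp only [hres, Pi.one_apply, map_one, mul_one] at hcount
  exact_mod_cast hcount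

theorem four_le_apply_one (hk : IsIrrChar G fun g ↦ (k g : ℂ)) (hne : k ≠ 1)
    (h35 : Fintype.card G < 2 * #{g : G | orderOf g = 3} + 2 * #{g : G | orderOf g = 5})
    (h5 : Fintype.card G < 4 * #{g : G | orderOf g = 5}) : 4 ≤ k 1 := by
  have hpos := hk.intCast_apply_one_pos
  have hmod {p : ℕ} (hp : p.Prime) {g : G} (hg : orderOf g = p) : k g % p = k 1 % p :=
    hk.modEq_of_orderOf_eq hp hg
  by_contra! hlt
  obtain h1 | h23 : k 1 = 1 ∨ (k 1 = 2 ∨ k 1 = 3) := by omega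
  · have hle (g : G) : (if orderOf g = 3 then 2 else 0) + (if orderOf g = 5 then 2 else 0) ≤
        k g ^ 2 + k g := by
      have hval : orderOf g = 3 ∨ orderOf g = 5 → 1 ≤ k g ∨ k g ≤ -2 := by
        rintro (hg | hg)
        · have := hmod Nat.prime_three hg
          omega
        · have := hmod Nat.prime_five hg
          omega
      have hnonneg : 0 ≤ k g ^ 2 + k g := by
        obtain h | h : 0 ≤ k g ∨ k g ≤ -1 := by omega
        all_goals nlinarith
      split_ifs with h3 h5 h5
      · omega
      · obtain h | h := hval (.inl h3) <;> nlinarith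
      · obtain h | h := hval (.inr h5) <;> nlinarith
      · simpa using hnonneg
    have hsum := sum_le_sum fun g (_ : g ∈ univ) ↦ hle g
    simp only [sum_add_distrib, hk.sum_sq_eq_card, hk.sum_eq_zero hne, ← sum_filter, sum_const,
      nsmul_eq_mul] at hsum
    omega
  · have hle (g : G) : (if orderOf g = 5 then 4 else 0) ≤ k g ^ 2 := by
      split_ifs with hg
      · have := hmod Nat.prime_five hg
        obtain h | h : 2 ≤ k g ∨ k g ≤ -2 := by omega
        all_goals nlinarith
      · positivity
    have hsum := sum_le_sum fun g (_ : g ∈ univ) ↦ hle g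
    simp only [hk.sum_sq_eq_card, ← sum_filter, sum_const, nsmul_eq_mul] at hsum
    omega

theorem eq_of_apply_one_eq_four (hk : IsIrrChar G fun g ↦ (k g : ℂ)) (h4 : k 1 = 4)
    (hcard : Fintype.card G ≤ 16 + #{g : G | orderOf g = 3} + #{g : G | orderOf g = 5}) :
    k = fun g ↦ if orderOf g = 1 then 4 else if orderOf g = 3 then 1 else
      if orderOf g = 5 then -1 else 0 := by
  have hmod {p : ℕ} (hp : p.Prime) {g : G} (hg : orderOf g = p) : k g % p = 4 % p :=
    h4 ▸ hk.modEq_of_orderOf_eq hp hg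
  let w (g : G) : ℤ := (if g = 1 then 16 else 0) + (if orderOf g = 3 then 1 else 0) +
    (if orderOf g = 5 then 1 else 0)
  have hle : w ≤ k ^ 2 := by
    intro g
    have hsq : orderOf g = 3 ∨ orderOf g = 5 → 0 < k g ^ 2 := by
      refine fun hg ↦ sq_pos_of_ne_zero ?_
      rcases hg with hg | hg
      · have := hmod Nat.prime_three hg
        omega
      · have := hmod Nat.prime_five hg
        omega
    by_cases h1 : g = 1
    · simp [w, h1, h4]
    · have := sq_nonneg (k g)
      simp only [w, if_neg h1, Pi.pow_apply]
      split_ifs <;> omega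
  have hsum : ∑ g, (k ^ 2) g ≤ ∑ g, w g := by
    simp only [w, Pi.pow_apply, hk.sum_sq_eq_card, sum_add_distrib, sum_ite_eq', mem_univ, if_true,
      ← sum_filter, sum_const, nsmul_eq_mul]
    omega
  have hw : w = k ^ 2 := hle.eq_of_not_lt fun h ↦ (Fintype.sum_strictMono h).not_ge hsum
  ext g
  by_cases h1 : g = 1
  · simp [h1, h4]
  have hg : w g = k g ^ 2 := congrFun hw g
  simp only [w, if_neg h1, zero_add] at hg
  simp only [orderOf_eq_one_iff, if_neg h1]
  split_ifs at hg ⊢ with h3 h5 h5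
  · omega
  · have := hmod Nat.prime_three h3
    obtain h | h := sq_eq_one_iff.1 hg.symm <;> omega
  · have := hmod Nat.prime_five h5
    obtain h | h := sq_eq_one_iff.1 hg.symm <;> omega
  · simpa using hg.symm

theorem apply_eq_one_of_apply_one_eq_four (hk : IsIrrChar G fun g ↦ (k g : ℂ)) (h4 : k 1 = 4)
    (hcard : 2 * Fintype.card G ≤ 9 + 4 * #{g : G | orderOf g = 5} + #{g : G | orderOf g = 2} +
      #{g : G | orderOf g = 4}) {g : G} (hg : ¬ orderOf g ∣ 4) (hg5 : orderOf g ≠ 5) :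
    k g = 1 := by
  let w (g : G) : ℤ := (if g = 1 then 9 else 0) + (if orderOf g = 5 then 4 else 0) +
    (if orderOf g = 2 then 1 else 0) + (if orderOf g = 4 then 1 else 0)
  have hle : w ≤ (k - 1) ^ 2 := by
    intro g
    have h5 : orderOf g = 5 → 4 ≤ (k g - 1) ^ 2 := by
      intro hg
      have := hk.modEq_of_orderOf_eq Nat.prime_five hg
      rw [h4, Int.ModEq] at this
      obtain h | h : 3 ≤ k g ∨ k g ≤ -1 := by omega
      all_goals nlinarith
    have h2 : orderOf g = 2 ∨ orderOf g = 4 → 1 ≤ (k g - 1) ^ 2 := by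
      intro hg
      have hdvd : orderOf g ∣ 2 ^ 2 := by rcases hg with hg | hg <;> norm_num [hg]
      have := hk.intCast_modEq Nat.prime_two (orderOf_dvd_iff_pow_eq_one.1 hdvd)
      rw [h4, Int.ModEq] at this
      have : k g - 1 ≠ 0 := by omega
      exact sq_pos_of_ne_zero this
    by_cases h1 : g = 1
    · simp [w, h1, h4]
    · have := sq_nonneg (k g - 1)
      simp only [w, if_neg h1, Pi.pow_apply, Pi.sub_apply, Pi.one_apply]
      split_ifs <;> omega
  have hsum : ∑ g, ((k - 1) ^ 2 : G → ℤ) g ≤ ∑ g, w g := by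
    have hne : k ≠ 1 := fun h ↦ by simp [h] at h4
    simp only [w, Pi.pow_apply, Pi.sub_apply, Pi.one_apply, sub_sq, mul_one, one_pow,
      hk.sum_sq_eq_card, sum_add_distrib, sum_sub_distrib, ← mul_sum, hk.sum_eq_zero hne,
      sum_ite_eq', mem_univ, if_true, ← sum_filter, sum_const, nsmul_eq_mul, card_univ]
    omega
  have hw : w = (k - 1) ^ 2 := hle.eq_of_not_lt fun h ↦ (Fintype.sum_strictMono h).not_ge hsum
  have hval : (k g - 1) ^ 2 = 0 := by
    rw [← show w g = (k g - 1) ^ 2 from congrFun hw g]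
    have h1 : g ≠ 1 := by rintro rfl; simp at hg
    have h2 : orderOf g ≠ 2 := fun h ↦ hg (h ▸ by norm_num)
    have h4 : orderOf g ≠ 4 := fun h ↦ hg (h ▸ dvd_rfl)
    simp [w, h1, h2, h4, hg5]
  simpa [sub_eq_zero] using hval

theorem apply_one_ne_four (hk : IsIrrChar G fun g ↦ (k g : ℂ)) (h9 : 9 ∣ Fintype.card G)
    (hcard : 2 * Fintype.card G ≤ 9 + 4 * #{g : G | orderOf g = 5} + #{g : G | orderOf g = 2} +
      #{g : G | orderOf g = 4}) : k 1 ≠ 4 := by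
  intro h4
  have : Fact (Nat.Prime 3) := ⟨Nat.prime_three⟩
  obtain ⟨P, hP⟩ := Sylow.exists_subgroup_card_pow_prime (G := G) 3 (n := 2)
    (by simpa using h9)
  have hval (g : P) (hg : g ≠ 1) : k g = 1 := by
    have hdvd : orderOf (g : G) ∣ 3 ^ 2 := by
      rw [Subgroup.orderOf_coe, ← hP]
      exact orderOf_dvd_natCard g
    obtain ⟨i, hi, hgi⟩ := (Nat.dvd_prime_pow Nat.prime_three).1 hdvd
    have hi0 : i ≠ 0 := by
      rintro rfl
      simp [hg] at hgi
    refine hk.apply_eq_one_of_apply_one_eq_four h4 hcard ?_ ?_ <;> rw [hgi] <;>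
      interval_cases i <;> simp at hi0 ⊢
  have hsum : ∑ g : P, k g = 12 := by
    rw [← add_sum_erase _ _ (mem_univ (1 : P)),
      sum_congr rfl fun g hg ↦ hval g (ne_of_mem_erase hg), OneMemClass.coe_one, h4, sum_const,
      card_erase_of_mem (mem_univ (1 : P)), card_univ, ← Nat.card_eq_fintype_card, hP]
    norm_num
  have := hk.card_subgroup_dvd_sum P
  rw [hsum, hP] at this
  norm_num at this

end IsIrrChar
end IntegerCharacters

section SylowAction

open MulAction

variable {G : Type*} [Group G] [Finite G] {p : ℕ} [Fact p.Prime]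

theorem isMultiplyPretransitive_sylow (hcard : Nat.card (Sylow p G) = p + 1) :
    IsMultiplyPretransitive G (Sylow p G) 2 := by
  have horbit (P Q : Sylow p G) (hQ : Q ≠ P) : orbit P Q = {P}ᶜ := by
    obtain ⟨n, hn⟩ := P.isPGroup'.card_orbit Q
    have hfix : P ∈ fixedPoints P (Sylow p G) := P.isPGroup'.sylow_mem_fixedPoints_iff.2 le_rfl
    have hsub : orbit P Q ⊆ {P}ᶜ := by
      rintro _ ⟨g, rfl⟩ (hg : g • Q = P)
      exact hQ (MulAction.injective g (hg.trans (hfix g).symm))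
    have hn0 : n ≠ 0 := by
      rintro rfl
      have : Q ∈ fixedPoints P (Sylow p G) := by
        rw [← subsingleton_orbit_iff_mem_fixedPoints, ← Set.subsingleton_coe]
        exact (Nat.card_eq_one_iff_unique.1 hn).1
      exact hQ (Sylow.ext (P.3 Q.2 (P.isPGroup'.sylow_mem_fixedPoints_iff.1 this)))
    refine Set.eq_of_subset_of_ncard_le hsub ?_ (Set.toFinite _)
    rw [Set.ncard_compl, Set.ncard_singleton, hcard, ← Nat.card_coe_set_eq, hn]
    exact Nat.le_self_pow hn0 p
  let P : Sylow p G := default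
  rw [SubMulAction.ofStabilizer.isMultiplyPretransitive (n := 1) (a := P), is_one_pretransitive_iff]
  refine ⟨fun Q R ↦ ?_⟩
  have hR : (R : Sylow p G) ∈ orbit P (Q : Sylow p G) := by
    rw [horbit P Q Q.2]
    exact R.2
  obtain ⟨g, hg⟩ := hR
  exact ⟨⟨g, Sylow.smul_eq_iff_mem_normalizer.2 (Subgroup.le_normalizer g.2)⟩, Subtype.ext hg⟩

theorem card_sylow_five_of_isSimpleGroup [IsSimpleGroup G] (hcard : Nat.card G = 60) :
    Nat.card (Sylow 5 G) = 6 := by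
  have : Fact (Nat.Prime 5) := ⟨Nat.prime_five⟩
  obtain ⟨H, hH⟩ := Sylow.exists_subgroup_card_pow_prime (G := G) 5 (n := 1) (by norm_num [hcard])
  have hindex : H.index = 12 := by
    have := H.card_mul_index
    rw [hcard, hH] at this
    omega
  let P : Sylow 5 G := (IsPGroup.of_card hH).toSylow (by norm_num [hindex])
  have hdvd : Nat.card (Sylow 5 G) ∣ 12 := hindex ▸ P.card_dvd_index
  have hmod : Nat.card (Sylow 5 G) % 5 = 1 := card_sylow_modEq_one 5 G
  have hne : Nat.card (Sylow 5 G) ≠ 1 := by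
    intro h
    have hnormal : H.Normal := by
      rw [← Subgroup.normalizer_eq_top_iff, ← Subgroup.index_eq_one]
      exact P.card_eq_index_normalizer.symm.trans h
    obtain rfl | rfl := hnormal.eq_bot_or_eq_top
    · simp at hH
    · simp at hindex
  have hle := Nat.le_of_dvd (by norm_num) hdvd
  generalize Nat.card (Sylow 5 G) = n at *
  interval_cases n <;> omega

end SylowAction

section AlternatingGroup

open Finset Equiv

theorem card_cycleType_le_card_orderOf (α : Type*) [Fintype α] [DecidableEq α] (m : Multiset ℕ) :
    #{g : alternatingGroup α | (g : Perm α).cycleType = m} ≤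
      #{g : alternatingGroup α | orderOf g = m.lcm} := by
  refine card_le_card (monotone_filter_right _ fun g _ hg ↦ ?_)
  rw [← hg, Perm.lcm_cycleType, Subgroup.orderOf_coe]

theorem card_alternatingGroup_fin_five : Nat.card (alternatingGroup (Fin 5)) = 60 := by
  rw [nat_card_alternatingGroup, Nat.card_fin]
  rfl

theorem card_alternatingGroup_fin_six : Nat.card (alternatingGroup (Fin 6)) = 360 := by
  rw [nat_card_alternatingGroup, Nat.card_fin]
  rfl

theorem card_orderOf_ge_alternatingGroup_fin_five :
    20 ≤ #{g : alternatingGroup (Fin 5) | orderOf g = 3} ∧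
      24 ≤ #{g : alternatingGroup (Fin 5) | orderOf g = 5} := by
  have h (m : Multiset ℕ) := card_cycleType_le_card_orderOf (Fin 5) m
  simp only [AlternatingGroup.card_of_cycleType] at h
  exact ⟨h {3}, h {5}⟩

theorem card_orderOf_ge_alternatingGroup_fin_six :
    45 ≤ #{g : alternatingGroup (Fin 6) | orderOf g = 2} ∧
      40 ≤ #{g : alternatingGroup (Fin 6) | orderOf g = 3} ∧
      90 ≤ #{g : alternatingGroup (Fin 6) | orderOf g = 4} ∧
      144 ≤ #{g : alternatingGroup (Fin 6) | orderOf g = 5} := by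
  have h (m : Multiset ℕ) := card_cycleType_le_card_orderOf (Fin 6) m
  simp only [AlternatingGroup.card_of_cycleType] at h
  exact ⟨h {2, 2}, h {3}, h {4, 2}, h {5}⟩

end AlternatingGroup

section AlternatingCharacters

open Finset MulAction

theorem exists_isIrrChar_apply_one_eq_card_sub_one (G X : Type) [Group G] [Fintype G]
    [MulAction G X] [Finite X] [Nontrivial X] [IsMultiplyPretransitive G X 2] :
    ∃ ψ, IsIrrChar G ψ ∧ RatValued ψ ∧ ψ 1 = Nat.card X - 1 := by
  refine ⟨_, isIrrChar_permChar_sub_one X, fun g ↦ ⟨Nat.card (fixedBy X g) - 1, ?_⟩, ?_⟩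
  · simp [permChar]
  · simp [permChar]

theorem exists_apply_one_eq_five_alternatingGroup_five :
    ∃ ψ, IsIrrChar (alternatingGroup (Fin 5)) ψ ∧ RatValued ψ ∧ ψ 1 = 5 := by
  have : Fact (Nat.Prime 5) := ⟨Nat.prime_five⟩
  have hcard := card_sylow_five_of_isSimpleGroup card_alternatingGroup_fin_five
  have := isMultiplyPretransitive_sylow hcard
  have : Nontrivial (Sylow 5 (alternatingGroup (Fin 5))) :=
    Finite.one_lt_card_iff_nontrivial.1 (hcard ▸ by norm_num)
  obtain ⟨ψ, hψ, hr, h1⟩ := exists_isIrrChar_apply_one_eq_card_sub_one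
    (alternatingGroup (Fin 5)) (Sylow 5 (alternatingGroup (Fin 5)))
  exact ⟨ψ, hψ, hr, by rw [h1, hcard]; norm_num⟩

theorem exists_apply_one_eq_five_alternatingGroup_six :
    ∃ ψ, IsIrrChar (alternatingGroup (Fin 6)) ψ ∧ RatValued ψ ∧ ψ 1 = 5 := by
  have := alternatingGroup.isMultiplyPretransitive (Fin 6)
  have : IsMultiplyPretransitive (alternatingGroup (Fin 6)) (Fin 6) 2 :=
    isMultiplyPretransitive_of_le (n := Nat.card (Fin 6) - 2) (by simp) (by simp)
  obtain ⟨ψ, hψ, hr, h1⟩ :=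
    exists_isIrrChar_apply_one_eq_card_sub_one (alternatingGroup (Fin 6)) (Fin 6)
  exact ⟨ψ, hψ, hr, by rw [h1, Nat.card_fin]; norm_num⟩

theorem four_le_re_apply_one_alternatingGroup_five {ψ : alternatingGroup (Fin 5) → ℂ}
    (hψ : IsIrrChar _ ψ) (hr : RatValued ψ) (hne : ψ ≠ 1) : 4 ≤ (ψ 1).re := by
  obtain ⟨k, rfl⟩ := hψ.exists_eq_intCast hr
  obtain ⟨h3, h5⟩ := card_orderOf_ge_alternatingGroup_fin_five
  have hcard := card_alternatingGroup_fin_five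
  rw [Nat.card_eq_fintype_card] at hcard
  have hk : k ≠ 1 := by
    rintro rfl
    exact hne (by ext; simp)
  have := hψ.four_le_apply_one hk (by omega) (by omega)
  simpa using (Int.cast_le (R := ℝ)).2 this

theorem subsingleton_re_apply_one_lt_five_alternatingGroup_five :
    {ψ : alternatingGroup (Fin 5) → ℂ |
      IsIrrChar _ ψ ∧ RatValued ψ ∧ ψ ≠ 1 ∧ (ψ 1).re < 5}.Subsingleton := by
  have hval {k : alternatingGroup (Fin 5) → ℤ} (hk : IsIrrChar _ fun g ↦ (k g : ℂ))
      (hr : RatValued fun g ↦ (k g : ℂ)) (hne : (fun g ↦ (k g : ℂ)) ≠ 1) (hlt : (k 1 : ℂ).re < 5) :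
      k = fun g ↦ if orderOf g = 1 then 4 else if orderOf g = 3 then 1 else
        if orderOf g = 5 then -1 else 0 := by
    obtain ⟨h3, h5⟩ := card_orderOf_ge_alternatingGroup_fin_five
    have hcard := card_alternatingGroup_fin_five
    rw [Nat.card_eq_fintype_card] at hcard
    have hge : 4 ≤ k 1 := by
      exact_mod_cast four_le_re_apply_one_alternatingGroup_five hk hr hne
    have hlt : k 1 < 5 := by exact_mod_cast hlt
    exact hk.eq_of_apply_one_eq_four (by omega) (by omega)
  rintro ψ ⟨hψ, hr, hne, hlt⟩ ψ' ⟨hψ', hr', hne', hlt'⟩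
  obtain ⟨k, rfl⟩ := hψ.exists_eq_intCast hr
  obtain ⟨k', rfl⟩ := hψ'.exists_eq_intCast hr'
  rw [hval hψ hr hne hlt, hval hψ' hr' hne' hlt']

theorem five_le_re_apply_one_alternatingGroup_six {ψ : alternatingGroup (Fin 6) → ℂ}
    (hψ : IsIrrChar _ ψ) (hr : RatValued ψ) (hne : ψ ≠ 1) : 5 ≤ (ψ 1).re := by
  obtain ⟨k, rfl⟩ := hψ.exists_eq_intCast hr
  obtain ⟨h2, h3, h4, h5⟩ := card_orderOf_ge_alternatingGroup_fin_six
  have hcard := card_alternatingGroup_fin_six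
  rw [Nat.card_eq_fintype_card] at hcard
  have hk : k ≠ 1 := by
    rintro rfl
    exact hne (by ext; simp)
  have hge := hψ.four_le_apply_one hk (by omega) (by omega)
  have hne4 := hψ.apply_one_ne_four (by omega) (by omega)
  have : 5 ≤ k 1 := by omega
  simpa using (Int.cast_le (R := ℝ)).2 this

end AlternatingCharacters

section DirectProductsWithAlternatingGroups

variable {G : Type} [Group G] [Fintype G] {C : Subgroup G} {φ : C → ℂ} {S : Finset (G → ℂ)}

theorem nine_div_two_le_average_of_alternatingGroup_five (e : G ≃* alternatingGroup (Fin 5) × C)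
    (he : ∀ c : C, e.symm (1, c) = c) (hφ : IsIrrChar C φ)
    (hS : ∀ χ : G → ℂ, χ ∈ S ↔ IsConstituent (_root_.Ind C φ) χ ∧ RatValued χ ∧ 1 < (χ 1).re)
    (hne : S.Nonempty) :
    (9 / 2 : ℝ) ≤ (∑ χ ∈ S, (χ 1).re) / S.card ∧
      (1 < (φ 1).re → (9 / 2 : ℝ) < (∑ χ ∈ S, (χ 1).re) / S.card) := by
  have hmem := mem_iff_exists_prodChar he hφ hS hne
  have h4 (ψ) := four_le_re_apply_one_alternatingGroup_five (ψ := ψ)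
  have h5 := exists_apply_one_eq_five_alternatingGroup_five
  obtain ⟨d, hd, hφd⟩ := hφ.exists_nat_apply_one
  obtain rfl | hd : d = 1 ∨ 1 < d := by omega
  · have havg := add_five_div_two_le_average (by simpa using hφd) (by norm_num) hmem h4
      subsingleton_re_apply_one_lt_five_alternatingGroup_five h5
    exact ⟨by linarith, fun h ↦ by simp [hφd] at h⟩
  · have havg := nine_div_two_lt_average_of_one_lt hd hφd hmem h4 h5
    exact ⟨havg.le, fun _ ↦ havg⟩

theorem nine_div_two_lt_average_of_alternatingGroup_six (e : G ≃* alternatingGroup (Fin 6) × C)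
    (he : ∀ c : C, e.symm (1, c) = c) (hφ : IsIrrChar C φ)
    (hS : ∀ χ : G → ℂ, χ ∈ S ↔ IsConstituent (_root_.Ind C φ) χ ∧ RatValued χ ∧ 1 < (χ 1).re)
    (hne : S.Nonempty) : (9 / 2 : ℝ) < (∑ χ ∈ S, (χ 1).re) / S.card := by
  have hmem := mem_iff_exists_prodChar he hφ hS hne
  have hle (ψ) := five_le_re_apply_one_alternatingGroup_six (ψ := ψ)
  have h5 := exists_apply_one_eq_five_alternatingGroup_six
  obtain ⟨d, hd, hφd⟩ := hφ.exists_nat_apply_one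
  obtain rfl | hd : d = 1 ∨ 1 < d := by omega
  · have havg := add_five_div_two_le_average (by simpa using hφd) le_rfl hmem hle
      (fun ψ hψ ↦ absurd hψ.2.2.2 (hle ψ hψ.1 hψ.2.1 hψ.2.2.1).not_gt) h5
    linarith
  · exact nine_div_two_lt_average_of_one_lt hd hφd hmem
      (fun ψ hψ hr hne ↦ (by norm_num : (4 : ℝ) ≤ 5).trans (hle ψ hψ hr hne)) h5

end DirectProductsWithAlternatingGroups

/-- Let `G = M × C` (an internal direct product) with `M ≅ Alt 5` or `Alt 6`, and let
`φ ∈ Irr(C)` be such that `φ^G` has a non-linear rational-valued irreducible constituent.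
Then the average degree of the non-linear rational-valued irreducible constituents of
`φ^G` is at least `9/2`, and is strictly greater than `9/2` if `φ(1) > 1` or `M ≅ Alt 6`. -/
theorem stmt7 (G : Type) [Group G] [Fintype G] (M C : Subgroup G)
    [M.Normal] [C.Normal] (hMC : M ⊓ C = ⊥) (hsup : M ⊔ C = ⊤)
    (hM : Nonempty (↥M ≃* alternatingGroup (Fin 5)) ∨
      Nonempty (↥M ≃* alternatingGroup (Fin 6)))
    (φ : ↥C → ℂ) (hφ : IsIrrChar ↥C φ)
    (S : Finset (G → ℂ))
    (hS : ∀ χ : G → ℂ, χ ∈ S ↔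
      (IsConstituent (Ind C φ) χ ∧ RatValued χ ∧ 1 < (χ 1).re))
    (hne : S.Nonempty) :
    (9 / 2 : ℝ) ≤ (∑ χ ∈ S, (χ 1).re) / S.card ∧
      ((1 < (φ 1).re ∨ Nonempty (↥M ≃* alternatingGroup (Fin 6))) →
        (9 / 2 : ℝ) < (∑ χ ∈ S, (χ 1).re) / S.card) := by
  have average_of_equiv_six : Nonempty (M ≃* alternatingGroup (Fin 6)) →
      (9 / 2 : ℝ) < (∑ χ ∈ S, (χ 1).re) / S.card := by
    rintro ⟨f⟩
    obtain ⟨e, he⟩ := exists_mulEquiv_prod hMC hsup f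
    exact nine_div_two_lt_average_of_alternatingGroup_six e he hφ hS hne
  obtain ⟨⟨f⟩⟩ | h6 := hM
  · obtain ⟨e, he⟩ := exists_mulEquiv_prod hMC hsup f
    obtain ⟨hle, hlt⟩ := nine_div_two_le_average_of_alternatingGroup_five e he hφ hS hne
    exact ⟨hle, fun h ↦ h.elim hlt average_of_equiv_six⟩
  · exact ⟨(average_of_equiv_six h6).le, fun _ ↦ average_of_equiv_six h6⟩
end
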